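/- arXiv:1206.2765 — 3 statements merged into one kernel-verified Lean document; each statement's English description precedes it below -/
import Mathlib

section
/- For nonzero integers i, j, k, the word a^{-i} b^j a^i b^k in the free group F(a,b) is not a proper power; i.e., there is no word S in F(a,b) and integer n > 1 with a^{-i} b^j a^i b^k = S^n as reduced words. -/
def innAut (G : Type*) [Group G] : Subgroup (MulAut G) := (MulAut.conj : G →* MulAut G).range

instance innAut_normal (G : Type*) [Group G] : (innAut G).Normal := by
  constructor
  rintro x ⟨g, rfl⟩ f
  refine ⟨f g, ?_⟩
  ext h
  simp [MulAut.conj_apply, MulAut.mul_apply, mul_assoc]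

abbrev Out (G : Type*) [Group G] := MulAut G ⧸ innAut G

def ResiduallyFinite (G : Type*) [Group G] : Prop :=
  ∀ g : G, g ≠ 1 → ∃ N : Subgroup G, N.Normal ∧ Finite (G ⧸ N) ∧ g ∉ N

noncomputable def expSum (i : Fin 2) : FreeGroup (Fin 2) →* Multiplicative ℤ :=
  FreeGroup.lift (fun j => Multiplicative.ofAdd (if j = i then (1 : ℤ) else 0))

noncomputable def σ (i : Fin 2) (w : FreeGroup (Fin 2)) : ℤ :=
  Multiplicative.toAdd (expSum i w)

def NielsenEquiv {G : Type*} [Group G] {n : ℕ} (Y Z : Fin n → G) : Prop :=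
  ∃ φ : FreeGroup (Fin n) ≃* FreeGroup (Fin n),
    ∀ i, FreeGroup.lift Y (φ (FreeGroup.of i)) = Z i

def SameTSystem {G : Type*} [Group G] {n : ℕ} (Y Z : Fin n → G) : Prop :=
  ∃ ψ : G ≃* G, NielsenEquiv (fun i => ψ (Y i)) Z

open FreeGroup in
/-- A nonzero power of a generator and its inverse are represented by constant words. -/
theorem exists_of_zpow_eq_mk_replicate {α : Type*} (x : α) {z : ℤ} (hz : z ≠ 0) :
    ∃ (m : ℕ) (s : Bool), of x ^ z = mk (List.replicate (m + 1) (x, s)) ∧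
      of x ^ (-z) = mk (List.replicate (m + 1) (x, !s)) := by
  have key (m : ℕ) : of x ^ ((m + 1 : ℕ) : ℤ) = mk (List.replicate (m + 1) (x, true)) ∧
      of x ^ (-((m + 1 : ℕ) : ℤ)) = mk (List.replicate (m + 1) (x, false)) := by
    have h : of x ^ (m + 1) = mk (List.replicate (m + 1) (x, true)) := by
      classical
      rw [← toWord_of_pow, mk_toWord]
    rw [zpow_neg, zpow_natCast, h, inv_mk]
    simp [invRev]
  obtain ⟨m, hm⟩ := Nat.exists_eq_succ_of_ne_zero (Int.natAbs_ne_zero.2 hz)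
  rcases Int.natAbs_eq z with h | h <;> rw [h, hm]
  · exact ⟨m, true, key m⟩
  · exact ⟨m, false, (key m).2, by simpa using (key m).1⟩

open FreeGroup in
/-- The reduced word of a power `S ^ n` with `n ≥ 2` either begins and ends with mutually inverse
letters, or contains two consecutive copies of a word containing all of its letters. -/
theorem exists_toWord_pow_eq {α : Type*} [DecidableEq α] (S : FreeGroup α) {n : ℕ} (hn : 1 < n) :
    (∃ (p : α × Bool) (M : List (α × Bool)), (S ^ n).toWord = p :: M ++ [(p.1, !p.2)]) ∨
    ∃ r t : List (α × Bool), (S ^ n).toWord = r ++ (r ++ t) ∧ ∀ p ∈ (S ^ n).toWord, p ∈ r := by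
  obtain ⟨n, rfl⟩ := Nat.exists_eq_add_of_lt hn
  rw [toWord_pow, reduceCyclically.reduce_flatten_replicate isReduced_toWord]
  cases hc : reduceCyclically.conjugator S.toWord with
  | nil =>
    refine .inr ⟨reduceCyclically S.toWord,
      (List.replicate n (reduceCyclically S.toWord)).flatten, ?_, ?_⟩
    · simp [show 1 + n + 1 = n + 1 + 1 by omega, List.replicate_succ]
    · simp
  | cons p c =>
    refine .inl ⟨p, c ++ (List.replicate (1 + n + 1) (reduceCyclically S.toWord)).flatten ++
      invRev c, ?_⟩
    simp [invRev]

theorem statement_0 (i j k : ℤ) (hi : i ≠ 0) (hj : j ≠ 0) (hk : k ≠ 0) :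
    ¬ ∃ (S : FreeGroup (Fin 2)) (n : ℕ), 1 < n ∧
      (FreeGroup.of (0 : Fin 2)) ^ (-i) * (FreeGroup.of (1 : Fin 2)) ^ j *
        (FreeGroup.of (0 : Fin 2)) ^ i * (FreeGroup.of (1 : Fin 2)) ^ k = S ^ n := by
  rintro ⟨S, n, hn, h⟩
  obtain ⟨m, s, hi₁, hi₂⟩ := exists_of_zpow_eq_mk_replicate (0 : Fin 2) hi
  obtain ⟨p, t, hj₁, -⟩ := exists_of_zpow_eq_mk_replicate (1 : Fin 2) hj
  obtain ⟨q, u, hk₁, -⟩ := exists_of_zpow_eq_mk_replicate (1 : Fin 2) hk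
  rw [hi₁, hi₂, hj₁, hk₁, FreeGroup.mul_mk, FreeGroup.mul_mk, FreeGroup.mul_mk] at h
  set W : List (Fin 2 × Bool) := List.replicate (m + 1) (0, !s) ++ List.replicate (p + 1) (1, t) ++
    List.replicate (m + 1) (0, s) ++ List.replicate (q + 1) (1, u) with hW
  have hred : FreeGroup.IsReduced W := by
    have hrep (l : ℕ) (x : Fin 2 × Bool) : (List.replicate l x).IsChain
        fun a b => a.1 = b.1 → a.2 = b.2 :=
      List.isChain_replicate_of_rel l fun _ => rfl
    rw [FreeGroup.IsReduced, hW]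
    refine ((hrep _ _).append (hrep _ _) ?_ |>.append (hrep _ _) ?_).append (hrep _ _) ?_ <;>
      simp [List.getLast?_replicate, List.head?_replicate]
  have hS : (S ^ n).toWord = W := by
    rw [← h, FreeGroup.toWord_mk, hred.reduce_eq]
  have hpw : W.Pairwise fun a b => ¬ (a = (0, s) ∧ b = (0, !s)) := by
    simp only [hW, List.pairwise_append, List.pairwise_replicate, List.mem_append,
      List.mem_replicate]
    grind
  rcases exists_toWord_pow_eq S hn with ⟨x, M, hx⟩ | ⟨r, v, hr, hmem⟩
  · rw [hS] at hx
    have h₁ := congrArg List.head? hx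
    have h₂ := congrArg List.getLast? hx
    simp [hW, List.replicate_succ] at h₁
    rw [List.getLast?_concat, ← h₁] at h₂
    simp [hW, List.getLast?_append, List.getLast?_replicate] at h₂
  · rw [hS] at hr hmem
    rw [hr, List.pairwise_append] at hpw
    exact hpw.2.2 _ (hmem (0, s) (by simp [hW])) _
      (List.mem_append_left _ (hmem (0, !s) (by simp [hW]))) ⟨rfl, rfl⟩
end

section
/- Let G = ⟨a, b; r⟩ with σ_a(R) = 0 for all R ∈ r and r not contained in F(a,b)′. If ψ is a tame automorphism of G (i.e., (aψ, bψ) is Nielsen equivalent to (a,b)), then there exist signs ε₀, ε₁ ∈ {±1}, an integer k, and an inner automorphism γ of G such that aψγ = a^{ε₀} b^k and bψγ = b^{ε₁} in G. -/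
section CommonPrefix

variable {β : Type*} [DecidableEq β]

/-- The length of the longest common prefix of two lists. -/
def List.commonPrefixLength : List β → List β → ℕ
  | a :: l, b :: m => if a = b then commonPrefixLength l m + 1 else 0
  | _, _ => 0

theorem List.min_commonPrefixLength_le :
    ∀ l m n : List β,
      min (commonPrefixLength l n) (commonPrefixLength n m) ≤ commonPrefixLength l m
  | [], _, _ => by simp [commonPrefixLength]
  | _ :: _, [], n => by cases n <;> simp [commonPrefixLength]
  | _ :: _, _ :: _, [] => by simp [commonPrefixLength]
  | a :: l, b :: m, c :: n => by
    have := min_commonPrefixLength_le l m n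
    simp only [commonPrefixLength]
    grind

theorem List.exists_eq_append_commonPrefixLength :
    ∀ l m : List β, ∃ p l' m', l = p ++ l' ∧ m = p ++ m' ∧ p.length = commonPrefixLength l m ∧
      ∀ a ∈ l'.head?, ∀ b ∈ m'.head?, a ≠ b
  | [], m => ⟨[], [], m, by simp [commonPrefixLength]⟩
  | a :: l, [] => ⟨[], a :: l, [], by simp [commonPrefixLength]⟩
  | a :: l, b :: m => by
    by_cases hab : a = b
    · obtain ⟨p, l', m', hl, hm, hp, h⟩ := exists_eq_append_commonPrefixLength l m
      exact ⟨a :: p, l', m', by simp [hl], by simp [hm, hab],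
        by simp [commonPrefixLength, hab, hp], h⟩
    · exact ⟨[], a :: l, b :: m, by simp [commonPrefixLength, hab]⟩

end CommonPrefix

namespace FreeGroup

variable {α : Type*} [DecidableEq α]

theorem IsReduced.invRev {l : List (α × Bool)} (h : IsReduced l) :
    IsReduced (FreeGroup.invRev l) := by
  rw [isReduced_iff_reduce_eq, reduce_invRev, h.reduce_eq]

theorem IsReduced.invRev_append {l m : List (α × Bool)} (hl : IsReduced l) (hm : IsReduced m)
    (h : ∀ a ∈ l.head?, ∀ b ∈ m.head?, a ≠ b) : IsReduced (FreeGroup.invRev l ++ m) := by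
  rcases l with _ | ⟨a, l⟩
  · simpa using hm
  rcases m with _ | ⟨b, m⟩
  · simpa using hl.invRev
  have hl' := hl.invRev
  rw [invRev_cons] at hl' ⊢
  refine IsReduced.append_overlap hl' ?_ (by simp [FreeGroup.invRev])
  have hab : a ≠ b := h a (by simp) b (by simp)
  simp only [FreeGroup.invRev, List.map_cons, List.map_nil, List.reverse_cons, List.reverse_nil,
    List.nil_append, List.singleton_append, isReduced_cons_cons]
  refine ⟨fun h1 => ?_, hm⟩
  by_contra h2
  exact hab (Prod.ext h1 (by simpa using h2))

theorem norm_mk_of_isReduced {l : List (α × Bool)} (h : IsReduced l) :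
    norm (mk l) = l.length := by
  rw [norm, toWord_mk, h.reduce_eq]

/-- Twice the Gromov product of two elements with respect to the word length. -/
def gromov (g h : FreeGroup α) : ℤ := norm g + norm h - norm (g⁻¹ * h)

theorem exists_commonPrefix (g h : FreeGroup α) : ∃ p : FreeGroup α,
    (norm p : ℤ) = List.commonPrefixLength g.toWord h.toWord ∧
    (norm (p⁻¹ * g) : ℤ) = norm g - norm p ∧ (norm (p⁻¹ * h) : ℤ) = norm h - norm p ∧
    gromov g h = 2 * norm p := by
  obtain ⟨p, l, m, hl, hm, hp, hne⟩ :=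
    List.exists_eq_append_commonPrefixLength g.toWord h.toWord
  have hg : IsReduced (p ++ l) := hl ▸ isReduced_toWord
  have hh : IsReduced (p ++ m) := hm ▸ isReduced_toWord
  have hpr : IsReduced p := hg.infix ⟨[], l, by simp⟩
  have hlr : IsReduced l := hg.infix ⟨p, [], by simp⟩
  have hmr : IsReduced m := hh.infix ⟨p, [], by simp⟩
  have eg : g = mk p * mk l := by rw [mul_mk, ← hl, mk_toWord]
  have eh : h = mk p * mk m := by rw [mul_mk, ← hm, mk_toWord]
  have ng : norm g = p.length + l.length := by rw [norm, hl, List.length_append]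
  have nh : norm h = p.length + m.length := by rw [norm, hm, List.length_append]
  have np := norm_mk_of_isReduced hpr
  have ngh : norm (g⁻¹ * h) = l.length + m.length := by
    have : g⁻¹ * h = mk (FreeGroup.invRev l ++ m) := by
      rw [eg, eh, ← mul_mk, ← inv_mk]; group
    rw [this, norm_mk_of_isReduced (hlr.invRev_append hmr hne), List.length_append,
      invRev_length]
  refine ⟨mk p, by rw [np, hp], ?_, ?_, ?_⟩
  · rw [eg, inv_mul_cancel_left, ← eg, norm_mk_of_isReduced hlr]; omega
  · rw [eh, inv_mul_cancel_left, ← eh, norm_mk_of_isReduced hmr]; omega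
  · rw [gromov]; omega

theorem gromov_eq_commonPrefixLength (g h : FreeGroup α) :
    gromov g h = 2 * List.commonPrefixLength g.toWord h.toWord := by
  obtain ⟨p, hp, -, -, h⟩ := exists_commonPrefix g h
  rw [h, hp]

theorem min_gromov_le (g h k : FreeGroup α) : min (gromov g k) (gromov k h) ≤ gromov g h := by
  simp only [gromov_eq_commonPrefixLength]
  have := List.min_commonPrefixLength_le g.toWord h.toWord k.toWord
  omega

theorem gromov_comm (g h : FreeGroup α) : gromov g h = gromov h g := by
  have : norm (h⁻¹ * g) = norm (g⁻¹ * h) := by rw [← norm_inv_eq]; simp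
  rw [gromov, gromov, this]; ring

theorem norm_lt_norm_mul_self {g : FreeGroup α} (hg : g ≠ 1) : norm g < norm (g * g) := by
  have hw := isReduced_toWord (x := g)
  have h2 := reduceCyclically.reduce_flatten_replicate_succ hw 1
  have h1 := reduceCyclically.conj_conjugator_reduceCyclically g.toWord
  have hne : reduceCyclically g.toWord ≠ [] := by
    intro h0
    apply hg
    rw [← mk_toWord (x := g), ← h1, h0, List.append_nil, ← mul_mk, ← inv_mk, mul_inv_cancel]
  have hpos := List.length_pos_iff.2 hne
  have e1 := congrArg List.length h1
  have e2 := congrArg List.length h2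
  have h3 : (g * g).toWord = reduce (List.replicate (1 + 1) g.toWord).flatten := by
    rw [← pow_two, toWord_pow]
  rw [norm, norm, h3]
  simp at e1 e2 ⊢
  omega

end FreeGroup

namespace FreeGroup

variable {α ι : Type*} [DecidableEq α]

theorem gromov_mul_add_gromov_inv (g h : FreeGroup α) :
    gromov g (g * h) + gromov g⁻¹ h = 2 * norm g := by
  simp only [gromov, inv_mul_cancel_left, inv_inv, norm_inv_eq]
  ring

theorem gromov_inv_lt {g : FreeGroup α} (hg : g ≠ 1) : gromov g g⁻¹ < norm g := by
  have := norm_lt_norm_mul_self (inv_ne_one.2 hg)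
  simp only [gromov, norm_inv_eq] at *
  omega

/-- The value at a letter of the homomorphism determined by `w`. -/
def letterVal {G : Type*} [Group G] (w : ι → G) (x : ι × Bool) : G :=
  cond x.2 (w x.1) (w x.1)⁻¹

theorem letterVal_not {G : Type*} [Group G] (w : ι → G) (x : ι × Bool) :
    letterVal w (x.1, !x.2) = (letterVal w x)⁻¹ := by
  rcases x with ⟨i, _ | _⟩ <;> simp [letterVal]

theorem gromov_prod_le {w : ι → FreeGroup α}
    (h2 : ∀ x y z : ι × Bool, x ≠ y → z ≠ (y.1, !y.2) →
      gromov (letterVal w x) (letterVal w y) + gromov (letterVal w y)⁻¹ (letterVal w z) <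
        2 * norm (letterVal w y)) :
    ∀ (l : List (ι × Bool)) (x y : ι × Bool), IsReduced (y :: l) → x ≠ y →
      gromov (letterVal w x) ((y :: l).map (letterVal w)).prod ≤
        gromov (letterVal w x) (letterVal w y)
  | [], x, y, _, _ => by simp
  | z :: l, x, y, hl, hxy => by
    rw [isReduced_cons_cons] at hl
    have hz : z ≠ (y.1, !y.2) := by
      rintro rfl
      simpa using hl.1 rfl
    have ih := gromov_prod_le h2 l (y.1, !y.2) z hl.2 hz.symm
    rw [letterVal_not] at ih
    have h := h2 x y z hxy hz
    rw [List.map_cons, List.prod_cons]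
    set W := ((z :: l).map (letterVal w)).prod
    have e := gromov_mul_add_gromov_inv (letterVal w y) W
    have hyp := min_gromov_le (letterVal w x) (letterVal w y) (letterVal w y * W)
    rw [gromov_comm (letterVal w y * W)] at hyp
    omega

theorem norm_le_norm_prod {w : ι → FreeGroup α}
    (h1 : ∀ x y : ι × Bool, x ≠ y →
      gromov (letterVal w x) (letterVal w y) ≤ norm (letterVal w x))
    (h2 : ∀ x y z : ι × Bool, x ≠ y → z ≠ (y.1, !y.2) →
      gromov (letterVal w x) (letterVal w y) + gromov (letterVal w y)⁻¹ (letterVal w z) <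
        2 * norm (letterVal w y)) :
    ∀ l : List (ι × Bool), IsReduced l → ∀ x ∈ l,
      norm (letterVal w x) ≤ norm (l.map (letterVal w)).prod
  | [], _, _, hx => by simp at hx
  | [y], _, x, hx => by simp_all
  | y :: z :: l, hl, x, hx => by
    rw [isReduced_cons_cons] at hl
    have hz : z ≠ (y.1, !y.2) := by
      rintro rfl
      simpa using hl.1 rfl
    have ih := norm_le_norm_prod h1 h2 (z :: l) hl.2
    have hle := gromov_prod_le h2 l (y.1, !y.2) z hl.2 hz.symm
    have hy := h1 (y.1, !y.2) z hz.symm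
    have hz' := h1 z (y.1, !y.2) hz
    rw [gromov_comm] at hz'
    rw [letterVal_not] at hle hy hz'
    rw [List.map_cons, List.prod_cons]
    set W := ((z :: l).map (letterVal w)).prod
    have hzW := ih z (by simp)
    simp only [gromov, inv_inv, norm_inv_eq] at hle hy hz'
    rcases List.mem_cons.1 hx with rfl | hx
    · omega
    · have := ih x hx
      omega

/-- If `y` cancels entirely in `x⁻¹ * y * x⁻¹`, half on either side, then the pair `x, y` can be
shortened by a Nielsen move followed by a conjugation. -/
theorem exists_conj_norm_le {x y : FreeGroup α} (h₁ : gromov x y = norm y)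
    (h₂ : gromov y⁻¹ x⁻¹ = norm y) (hxy : norm y ≤ norm x) :
    ∃ p : FreeGroup α, norm (p⁻¹ * (x * y⁻¹) * p) + norm y ≤ norm x ∧
      norm (p⁻¹ * y * p) ≤ norm y := by
  obtain ⟨p, -, hpx, hpy, hp⟩ := exists_commonPrefix x y
  refine ⟨p, ?_, ?_⟩
  · set x₁ := p⁻¹ * x with hx₁
    set q := p⁻¹ * y with hq
    have hyq : gromov y⁻¹ q⁻¹ = norm y := by
      have : y⁻¹⁻¹ * q⁻¹ = p := by rw [hq]; group
      rw [gromov, this, norm_inv_eq, norm_inv_eq]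
      omega
    have hxq := min_gromov_le x⁻¹ q⁻¹ y⁻¹
    have hxx : gromov x₁⁻¹ x⁻¹ = 2 * norm x₁ := by
      have : x₁⁻¹⁻¹ * x⁻¹ = p⁻¹ := by rw [hx₁]; group
      rw [gromov, this, norm_inv_eq, norm_inv_eq, norm_inv_eq]
      omega
    have h := min_gromov_le x₁⁻¹ q⁻¹ x⁻¹
    have e : p⁻¹ * (x * y⁻¹) * p = x₁⁻¹⁻¹ * q⁻¹ := by rw [hx₁, hq]; group
    rw [e]
    have hd : gromov x₁⁻¹ q⁻¹ = norm x₁ + norm q - norm (x₁⁻¹⁻¹ * q⁻¹) := by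
      rw [gromov, norm_inv_eq, norm_inv_eq]
    rw [gromov_comm x⁻¹ y⁻¹] at hxq
    omega
  · have := norm_mul_le (p⁻¹ * y) p
    omega

theorem norm_eq_one_iff_exists {g : FreeGroup α} (h : norm g = 1) :
    ∃ i, g = of i ∨ g = (of i)⁻¹ := by
  obtain ⟨⟨i, s⟩, hs⟩ := List.length_eq_one_iff.1 h
  refine ⟨i, ?_⟩
  rw [← mk_toWord (x := g), hs]
  cases s
  · right; simp [of, FreeGroup.invRev]
  · left; rfl

end FreeGroup

/-- The pairs obtained from `(x, y)` by positive Nielsen moves. -/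
inductive PositivePair {G : Type*} [Group G] (x y : G) : G → G → Prop
  | base : PositivePair x y x y
  | mul_right {u v : G} : PositivePair x y u v → PositivePair x y u (u * v)
  | mul_left {u v : G} : PositivePair x y u v → PositivePair x y (u * v) v

/-- The pairs obtained from `(a^±, b^±)` by positive Nielsen moves, up to signs, order and
simultaneous conjugation. -/
def StandardPair {G : Type*} [Group G] (a b u v : G) : Prop :=
  ∃ x y u' v' g : G, (x = a ∨ x = a⁻¹) ∧ (y = b ∨ y = b⁻¹) ∧ PositivePair x y u' v' ∧
    (((u = g * u' * g⁻¹ ∨ u = (g * u' * g⁻¹)⁻¹) ∧ (v = g * v' * g⁻¹ ∨ v = (g * v' * g⁻¹)⁻¹)) ∨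
      ((v = g * u' * g⁻¹ ∨ v = (g * u' * g⁻¹)⁻¹) ∧ (u = g * v' * g⁻¹ ∨ u = (g * v' * g⁻¹)⁻¹)))

section StandardPair

variable {G : Type*} [Group G] {a b u v : G}

theorem PositivePair.standardPair {x y : G} (hx : x = a ∨ x = a⁻¹) (hy : y = b ∨ y = b⁻¹)
    (h : PositivePair x y u v) : StandardPair a b u v :=
  ⟨x, y, u, v, 1, hx, hy, h, by simp⟩

namespace StandardPair

theorem swap (h : StandardPair a b u v) : StandardPair a b v u := by
  obtain ⟨x, y, u', v', g, hx, hy, hp, h⟩ := h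
  exact ⟨x, y, u', v', g, hx, hy, hp, h.symm⟩

theorem inv_left (h : StandardPair a b u v) : StandardPair a b u⁻¹ v := by
  obtain ⟨x, y, u', v', g, hx, hy, hp, h⟩ := h
  refine ⟨x, y, u', v', g, hx, hy, hp, ?_⟩
  simpa only [inv_inj, inv_eq_iff_eq_inv, inv_inv, or_comm (a := u = _⁻¹)] using h

theorem inv_right (h : StandardPair a b u v) : StandardPair a b u v⁻¹ :=
  h.swap.inv_left.swap

theorem conj (h : StandardPair a b u v) (k : G) :
    StandardPair a b (k * u * k⁻¹) (k * v * k⁻¹) := by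
  obtain ⟨x, y, u', v', g, hx, hy, hp, h⟩ := h
  refine ⟨x, y, u', v', k * g, hx, hy, hp, ?_⟩
  have e (s t : G) : (k * s * k⁻¹ = k * g * t * (k * g)⁻¹ ∨
      k * s * k⁻¹ = (k * g * t * (k * g)⁻¹)⁻¹) ↔ (s = g * t * g⁻¹ ∨ s = (g * t * g⁻¹)⁻¹) := by
    have h1 : k * g * t * (k * g)⁻¹ = k * (g * t * g⁻¹) * k⁻¹ := by group
    have h2 : (k * g * t * (k * g)⁻¹)⁻¹ = k * (g * t * g⁻¹)⁻¹ * k⁻¹ := by group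
    rw [h2, h1]
    simp only [mul_left_inj, mul_right_inj]
  simpa only [e] using h

theorem of_conj (k : G) (h : StandardPair a b (k * u * k⁻¹) (k * v * k⁻¹)) :
    StandardPair a b u v := by
  have := h.conj k⁻¹
  simpa [mul_assoc] using this

/-- Conjugation by `v` turns `(u * v, v)` into `(v * u, v)`. -/
theorem mul_comm_left (h : StandardPair a b (u * v) v) : StandardPair a b (v * u) v := by
  have := h.conj v
  simpa [mul_assoc] using this

end StandardPair

namespace PositivePair

variable {x y : G}

theorem standardPair_inv_mul_left (hx : x = a ∨ x = a⁻¹) (hy : y = b ∨ y = b⁻¹)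
    (h : PositivePair x y u v) : StandardPair a b (v⁻¹ * u) v := by
  cases h with
  | base =>
    have hy' : v⁻¹ = b ∨ v⁻¹ = b⁻¹ := by
      rcases hy with rfl | rfl <;> simp
    have h : StandardPair a b (u * v⁻¹) v⁻¹ :=
      (PositivePair.base (x := u) (y := v⁻¹)).mul_left.standardPair hx hy'
    simpa using StandardPair.inv_right (StandardPair.mul_comm_left h)
  | @mul_left w _ h =>
    have h3 : StandardPair a b w v := h.standardPair hx hy
    refine StandardPair.of_conj v ?_
    simpa [mul_assoc] using h3
  | @mul_right _ w h =>
    have h1 : StandardPair a b (u * w) w := h.mul_left.standardPair hx hy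
    simpa [mul_assoc] using StandardPair.inv_left (StandardPair.swap h1)

theorem standardPair_inv_mul_right (hx : x = a ∨ x = a⁻¹) (hy : y = b ∨ y = b⁻¹)
    (h : PositivePair x y u v) : StandardPair a b (u⁻¹ * v) u := by
  cases h with
  | base =>
    have hx' : u⁻¹ = a ∨ u⁻¹ = a⁻¹ := by
      rcases hx with rfl | rfl <;> simp
    have h : StandardPair a b u⁻¹ (u⁻¹ * v) :=
      (PositivePair.base (x := u⁻¹) (y := v)).mul_right.standardPair hx' hy
    simpa using StandardPair.swap (StandardPair.inv_left h)
  | mul_right h => simpa using StandardPair.swap (h.standardPair hx hy)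
  | @mul_left w _ h =>
    have h1 : StandardPair a b w (w * v) := h.mul_right.standardPair hx hy
    have h2 : StandardPair a b w (v * w) := by
      simpa [mul_assoc] using StandardPair.conj h1 w⁻¹
    refine StandardPair.of_conj v ?_
    simpa [mul_assoc] using StandardPair.inv_left h2

end PositivePair

theorem StandardPair.mul_left (h : StandardPair a b u v) : StandardPair a b (u * v) v := by
  obtain ⟨x, y, u', v', g, hx, hy, hp, h⟩ := h
  have key {s t : G} (h : StandardPair a b (s * t) t) :
      StandardPair a b (g * s * g⁻¹ * (g * t * g⁻¹)) (g * t * g⁻¹) := by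
    simpa [mul_assoc] using StandardPair.conj h g
  have comm {s t : G} (h : StandardPair a b (t * s) t) : StandardPair a b (s * t) t := by
    simpa [mul_assoc] using StandardPair.conj h t⁻¹
  have inv (s : G) : (g * s * g⁻¹)⁻¹ = g * s⁻¹ * g⁻¹ := by group
  have pp {s t : G} (h : StandardPair a b (s * t) t) (h' : StandardPair a b (t⁻¹ * s) t) :
      ∀ u v : G, (u = g * s * g⁻¹ ∨ u = (g * s * g⁻¹)⁻¹) →
        (v = g * t * g⁻¹ ∨ v = (g * t * g⁻¹)⁻¹) → StandardPair a b (u * v) v := by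
    rintro _ _ (rfl | rfl) (rfl | rfl)
    · exact key h
    · rw [inv t]
      exact key (comm (StandardPair.inv_right h'))
    · rw [inv s]
      refine key ?_
      simpa using StandardPair.inv_left h'
    · rw [inv s, inv t]
      refine key (comm ?_)
      simpa using StandardPair.inv_left (StandardPair.inv_right h)
  have h1 : StandardPair a b (u' * v') v' := hp.mul_left.standardPair hx hy
  have h2 : StandardPair a b (u' * v') u' := StandardPair.swap (hp.mul_right.standardPair hx hy)
  rcases h with ⟨hu, hv⟩ | ⟨hv, hu⟩
  · exact pp h1 (hp.standardPair_inv_mul_left hx hy) _ _ hu hv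
  · refine pp (comm h2) (hp.standardPair_inv_mul_right hx hy) _ _ hu hv

end StandardPair

section Reduction

open FreeGroup

theorem Subgroup.closure_pair_eq_top_of_mem {G : Type*} [Group G] {u v x y : G}
    (h : closure {u, v} = ⊤) (hu : u ∈ closure {x, y}) (hv : v ∈ closure {x, y}) :
    closure {x, y} = ⊤ := by
  rw [eq_top_iff, ← h, closure_le]
  rintro z (rfl | rfl)
  exacts [hu, hv]

theorem Subgroup.closure_pair_conj_eq_top {G : Type*} [Group G] {u v : G}
    (h : closure {u, v} = ⊤) (p : G) : closure {p⁻¹ * u * p, p⁻¹ * v * p} = ⊤ := by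
  have hmap : (closure {u, v}).map (MulAut.conj p⁻¹).toMonoidHom = ⊤ := by
    rw [h, ← MonoidHom.range_eq_map, MonoidHom.range_eq_top]
    exact (MulAut.conj p⁻¹).surjective
  rw [MonoidHom.map_closure, Set.image_pair] at hmap
  simpa [MulAut.conj_apply] using hmap

/-- A generating pair of total length `n` that is not standard, where every shorter generating
pair is standard. -/
structure MinimalPair (n : ℕ) (u v : FreeGroup (Fin 2)) : Prop where
  closure_eq : Subgroup.closure {u, v} = ⊤
  not_standard : ¬ StandardPair (of 0) (of 1) u v
  norm_add : norm u + norm v = n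
  standard_of_lt : ∀ x y : FreeGroup (Fin 2), Subgroup.closure {x, y} = ⊤ →
    norm x + norm y < n → StandardPair (of 0) (of 1) x y

namespace MinimalPair

variable {n : ℕ} {u v : FreeGroup (Fin 2)}

theorem swap (h : MinimalPair n u v) : MinimalPair n v u where
  closure_eq := by rw [Set.pair_comm]; exact h.closure_eq
  not_standard hs := h.not_standard hs.swap
  norm_add := by rw [add_comm]; exact h.norm_add
  standard_of_lt := h.standard_of_lt

theorem inv_left (h : MinimalPair n u v) : MinimalPair n u⁻¹ v where
  closure_eq := by
    refine Subgroup.closure_pair_eq_top_of_mem h.closure_eq ?_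
      (Subgroup.subset_closure (by simp))
    rw [← inv_mem_iff]
    exact Subgroup.subset_closure (by simp)
  not_standard hs := h.not_standard (by simpa using hs.inv_left)
  norm_add := by rw [norm_inv_eq]; exact h.norm_add
  standard_of_lt := h.standard_of_lt

theorem inv_right (h : MinimalPair n u v) : MinimalPair n u v⁻¹ :=
  h.swap.inv_left.swap

theorem closure_mul_left (h : MinimalPair n u v) : Subgroup.closure {u * v, v} = ⊤ := by
  have hv : v ∈ Subgroup.closure {u * v, v} := Subgroup.subset_closure (by simp)
  refine Subgroup.closure_pair_eq_top_of_mem h.closure_eq ?_ hv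
  have huv : u * v ∈ Subgroup.closure {u * v, v} := Subgroup.subset_closure (by simp)
  simpa using mul_mem huv (inv_mem hv)

theorem norm_le_norm_mul (h : MinimalPair n u v) : norm u ≤ norm (u * v) := by
  by_contra! hlt
  have hs := h.standard_of_lt (u * v) v h.closure_mul_left (by have := h.norm_add; omega)
  exact h.not_standard (by simpa using hs.inv_right.mul_left.inv_right)

theorem gromov_le (h : MinimalPair n u v) : gromov u v ≤ norm u := by
  have := h.swap.inv_left.norm_le_norm_mul
  have e : norm (v⁻¹ * u) = norm (u⁻¹ * v) := by rw [← norm_inv_eq]; simp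
  rw [gromov]
  rw [norm_inv_eq, e] at this
  omega

theorem not_commute (h : MinimalPair n u v) : ¬ Commute u v := by
  intro hc
  have : IsMulCommutative (Subgroup.closure {u, v}) := by
    refine Subgroup.isMulCommutative_closure ?_
    rintro x (rfl | rfl) y (rfl | rfl)
    exacts [rfl, hc, hc.symm, rfl]
  rw [h.closure_eq] at this
  have h01 := congrArg Subtype.val (this.is_comm.comm
    (⟨of 0, trivial⟩ : (⊤ : Subgroup (FreeGroup (Fin 2)))) ⟨of 1, trivial⟩)
  exact absurd h01 (by decide)

theorem ne_one_left (h : MinimalPair n u v) : u ≠ 1 := by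
  rintro rfl
  exact h.not_commute (Commute.one_left _)

theorem not_gromov_eq (h : MinimalPair n u v) :
    ¬ (gromov u v = norm v ∧ gromov v⁻¹ u⁻¹ = norm v) := by
  rintro ⟨h₁, h₂⟩
  have hle : norm v ≤ norm u := by
    have := h.gromov_le
    omega
  obtain ⟨p, hp, hq⟩ := exists_conj_norm_le h₁ h₂ hle
  have hv : norm v ≠ 0 := by
    rw [Ne, FreeGroup.norm_eq_zero]
    exact h.swap.ne_one_left
  have hcl : Subgroup.closure {u * v⁻¹, v} = ⊤ := by
    refine Subgroup.closure_pair_eq_top_of_mem h.inv_right.closure_mul_left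
      (Subgroup.subset_closure (by simp)) ?_
    rw [inv_mem_iff]
    exact Subgroup.subset_closure (by simp)
  have hs := h.standard_of_lt _ _ (Subgroup.closure_pair_conj_eq_top hcl p)
    (by have := h.norm_add; omega)
  have hs' : StandardPair (of 0) (of 1) (u * v⁻¹) v :=
    StandardPair.of_conj p⁻¹ (by simpa only [inv_inv] using hs)
  exact h.not_standard (by simpa using hs'.mul_left)

theorem letterVal_pair (h : MinimalPair n u v) {x y : Fin 2 × Bool} (hxy : x.1 ≠ y.1) :
    MinimalPair n (letterVal ![u, v] x) (letterVal ![u, v] y) := by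
  rcases x with ⟨i, _ | _⟩ <;> rcases y with ⟨j, _ | _⟩ <;> fin_cases i <;> fin_cases j <;>
    first
    | exact absurd rfl hxy
    | exact h
    | exact h.inv_left
    | exact h.inv_right
    | exact h.inv_left.inv_right
    | exact h.swap
    | exact h.swap.inv_left
    | exact h.swap.inv_right
    | exact h.swap.inv_left.inv_right

theorem letterVal_ne_one (h : MinimalPair n u v) (x : Fin 2 × Bool) :
    letterVal ![u, v] x ≠ 1 := by
  obtain ⟨j, hj⟩ := exists_ne x.1
  exact (h.letterVal_pair (y := (j, true)) hj.symm).ne_one_left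

theorem gromov_letterVal_lt (h : MinimalPair n u v) {x y : Fin 2 × Bool} (hxy : x ≠ y)
    (h1 : x.1 = y.1) : gromov (letterVal ![u, v] x) (letterVal ![u, v] y) <
      norm (letterVal ![u, v] x) := by
  have hy : y = (x.1, !x.2) := by
    rcases x with ⟨i, _ | _⟩ <;> rcases y with ⟨j, _ | _⟩ <;> simp_all
  rw [hy, letterVal_not]
  exact gromov_inv_lt (h.letterVal_ne_one x)

theorem gromov_letterVal_le (h : MinimalPair n u v) {x y : Fin 2 × Bool} (hxy : x ≠ y) :
    gromov (letterVal ![u, v] x) (letterVal ![u, v] y) ≤ norm (letterVal ![u, v] x) := by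
  by_cases h1 : x.1 = y.1
  · exact (h.gromov_letterVal_lt hxy h1).le
  · exact (h.letterVal_pair h1).gromov_le

theorem gromov_letterVal_add_lt (h : MinimalPair n u v) {x y z : Fin 2 × Bool} (hxy : x ≠ y)
    (hz : z ≠ (y.1, !y.2)) :
    gromov (letterVal ![u, v] x) (letterVal ![u, v] y) +
      gromov (letterVal ![u, v] y)⁻¹ (letterVal ![u, v] z) < 2 * norm (letterVal ![u, v] y) := by
  have hx1 := h.gromov_letterVal_le hxy.symm
  have hz1 := h.gromov_letterVal_le hz.symm
  rw [letterVal_not, norm_inv_eq] at hz1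
  have hx2 := h.gromov_letterVal_lt hxy.symm
  have hz2 := h.gromov_letterVal_lt hz.symm
  rw [letterVal_not, norm_inv_eq] at hz2
  rw [gromov_comm] at hx1 hx2
  by_cases hxy1 : y.1 = x.1
  · have := hx2 hxy1
    omega
  by_cases hyz1 : y.1 = z.1
  · have := hz2 hyz1
    omega
  by_contra! hge
  have e1 : gromov (letterVal ![u, v] x) (letterVal ![u, v] y) = norm (letterVal ![u, v] y) := by
    omega
  have e2 : gromov (letterVal ![u, v] y)⁻¹ (letterVal ![u, v] z) =
      norm (letterVal ![u, v] y) := by omega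
  have hxz : x.1 = z.1 := by omega
  have hcase : z = x ∨ z = (x.1, !x.2) := by
    rcases x with ⟨i, _ | _⟩ <;> rcases z with ⟨j, _ | _⟩ <;> simp_all
  rcases hcase with rfl | rfl
  · have h3 := min_gromov_le (letterVal ![u, v] y) (letterVal ![u, v] y)⁻¹ (letterVal ![u, v] z)
    rw [gromov_comm (letterVal ![u, v] y) (letterVal ![u, v] z),
      gromov_comm (letterVal ![u, v] z) (letterVal ![u, v] y)⁻¹] at h3
    have h4 := gromov_inv_lt (h.letterVal_ne_one y)
    omega
  · rw [letterVal_not] at e2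
    exact (h.letterVal_pair (Ne.symm hxy1)).not_gromov_eq ⟨e1, e2⟩

theorem exists_word (h : MinimalPair n u v) (k : Fin 2) :
    ∃ l : List (Fin 2 × Bool), (l.map (letterVal ![u, v])).prod = of k ∧
      ∀ x ∈ l, norm (letterVal ![u, v] x) ≤ 1 := by
  have hr : (FreeGroup.lift ![u, v]).range = ⊤ := by
    rw [FreeGroup.range_lift_eq_closure, ← h.closure_eq]
    simp [Matrix.range_cons, Set.pair_comm]
  obtain ⟨g, hg⟩ : of k ∈ (FreeGroup.lift ![u, v]).range := hr ▸ trivial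
  have hprod : (g.toWord.map (letterVal ![u, v])).prod = of k := by
    rw [← hg, ← mk_toWord (x := g), FreeGroup.lift_mk, mk_toWord]
    rfl
  refine ⟨g.toWord, hprod, fun x hx => ?_⟩
  have := norm_le_norm_prod (fun _ _ => h.gromov_letterVal_le)
    (fun _ _ _ => h.gromov_letterVal_add_lt) g.toWord isReduced_toWord x hx
  rwa [hprod, norm_of] at this

theorem norm_le_one (h : MinimalPair n u v) (i : Fin 2) : norm (![u, v] i) ≤ 1 := by
  by_contra! hlt
  obtain ⟨j, hj⟩ := exists_ne i
  have key (k : Fin 2) : of k ∈ Subgroup.zpowers (![u, v] j) := by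
    obtain ⟨l, hl, hn⟩ := h.exists_word k
    rw [← hl]
    refine Subgroup.list_prod_mem _ fun z hz => ?_
    obtain ⟨x, hx, rfl⟩ := List.mem_map.1 hz
    have hxn := hn x hx
    have hxj : x.1 = j := by
      by_contra hne
      have hxi : x.1 = i := by omega
      have : norm (letterVal ![u, v] x) = norm (![u, v] i) := by
        rcases x with ⟨x, _ | _⟩ <;> simp_all [letterVal]
      omega
    rcases x with ⟨x, _ | _⟩ <;> simp_all [letterVal]
  obtain ⟨r, hr⟩ := Subgroup.mem_zpowers_iff.1 (key 0)
  obtain ⟨s, hs⟩ := Subgroup.mem_zpowers_iff.1 (key 1)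
  have : (of 0 : FreeGroup (Fin 2)) * of 1 = of 1 * of 0 := by
    rw [← hr, ← hs, ← zpow_add, ← zpow_add, add_comm]
  exact absurd this (by decide)

theorem false (h : MinimalPair n u v) : False := by
  have hnorm {x y : FreeGroup (Fin 2)} (hm : MinimalPair n x y) : norm x = 1 := by
    have h0 : norm x ≤ 1 := hm.norm_le_one 0
    have h1 : norm x ≠ 0 := by
      rw [Ne, FreeGroup.norm_eq_zero]
      exact hm.ne_one_left
    omega
  obtain ⟨i, hi⟩ := norm_eq_one_iff_exists (hnorm h)
  obtain ⟨j, hj⟩ := norm_eq_one_iff_exists (hnorm h.swap)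
  have hij : i ≠ j := by
    rintro rfl
    apply h.not_commute
    rcases hi with rfl | rfl <;> rcases hj with rfl | rfl <;> simp
  have hcase : (i = 0 ∧ j = 1) ∨ (i = 1 ∧ j = 0) := by omega
  rcases hcase with ⟨rfl, rfl⟩ | ⟨rfl, rfl⟩
  · exact h.not_standard (PositivePair.base.standardPair hi hj)
  · exact h.not_standard (PositivePair.base.standardPair hj hi).swap

end MinimalPair

theorem standardPair_of_closure_eq_top (u v : FreeGroup (Fin 2))
    (h : Subgroup.closure {u, v} = ⊤) : StandardPair (of 0) (of 1) u v := by
  induction hn : norm u + norm v using Nat.strong_induction_on generalizing u v with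
  | _ n ih =>
    by_contra hs
    exact MinimalPair.false ⟨h, hs, hn, fun x y hxy hlt => ih _ hlt x y hxy rfl⟩

end Reduction

section ExponentSum

open FreeGroup

theorem σ_mul (i : Fin 2) (u v : FreeGroup (Fin 2)) : σ i (u * v) = σ i u + σ i v := by
  simp [σ]

theorem σ_inv (i : Fin 2) (u : FreeGroup (Fin 2)) : σ i u⁻¹ = -σ i u := by
  simp [σ]

theorem σ_of (i j : Fin 2) : σ i (of j) = if j = i then 1 else 0 := by
  simp [σ, expSum]

/-- The image of `w` in a commutative group depends only on its exponent sums. -/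
theorem map_eq_zpow_σ_mul_zpow_σ {A : Type*} [CommGroup A] (f : FreeGroup (Fin 2) →* A)
    (w : FreeGroup (Fin 2)) : f w = f (of 0) ^ σ 0 w * f (of 1) ^ σ 1 w := by
  induction w using FreeGroup.induction_on with
  | C1 => simp [σ]
  | of i => fin_cases i <;> simp [σ_of]
  | inv_of i ih => rw [_root_.map_inv, ih, σ_inv, σ_inv, zpow_neg, zpow_neg, mul_inv]
  | mul u v hu hv => rw [_root_.map_mul, hu, hv, σ_mul, σ_mul, zpow_add, zpow_add, mul_mul_mul_comm]

theorem mem_commutator_of_σ_eq_zero {w : FreeGroup (Fin 2)} (h0 : σ 0 w = 0) (h1 : σ 1 w = 0) :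
    w ∈ commutator (FreeGroup (Fin 2)) := by
  rw [← Abelianization.ker_of, MonoidHom.mem_ker, map_eq_zpow_σ_mul_zpow_σ, h0, h1]
  simp

theorem PositivePair.exists_σ_eq {x y u v : FreeGroup (Fin 2)} (h : PositivePair x y u v)
    (hy : σ 0 y = 0) :
    ∃ m n : ℕ, σ 0 u = σ 0 x * (m + 1) ∧ σ 0 v = σ 0 x * n ∧
      (n = 0 → v = y ∧ ∃ k : ℤ, u = x * y ^ k) := by
  induction h with
  | base => exact ⟨0, 0, by simp, by simpa using hy, fun _ => ⟨rfl, 0, by simp⟩⟩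
  | mul_right _ ih =>
    obtain ⟨m, n, hu, hv, -⟩ := ih
    exact ⟨m, m + 1 + n, hu, by rw [σ_mul, hu, hv]; push_cast; ring, by omega⟩
  | mul_left _ ih =>
    obtain ⟨m, n, hu, hv, h0⟩ := ih
    refine ⟨m + n, n, by rw [σ_mul, hu, hv]; push_cast; ring, hv, fun hn => ?_⟩
    obtain ⟨rfl, k, rfl⟩ := h0 hn
    exact ⟨rfl, k + 1, by rw [zpow_add_one, mul_assoc]⟩

theorem exists_zpow_of_eq_or_eq_inv {G : Type*} [Group G] {x a : G} (h : x = a ∨ x = a⁻¹) :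
    ∃ ε : ℤ, (ε = 1 ∨ ε = -1) ∧ x = a ^ ε := by
  rcases h with rfl | rfl
  · exact ⟨1, by simp⟩
  · exact ⟨-1, by simp⟩

theorem StandardPair.exists_conj_eq {u v : FreeGroup (Fin 2)}
    (h : StandardPair (of 0) (of 1) u v) (hσ : σ 0 v = 0) :
    ∃ (ε₀ ε₁ k : ℤ) (g : FreeGroup (Fin 2)), (ε₀ = 1 ∨ ε₀ = -1) ∧ (ε₁ = 1 ∨ ε₁ = -1) ∧
      g⁻¹ * u * g = of 0 ^ ε₀ * of 1 ^ k ∧ g⁻¹ * v * g = of 1 ^ ε₁ := by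
  obtain ⟨x, y, u', v', g, hx, hy, hp, h⟩ := h
  have hσx : σ 0 x ≠ 0 := by
    rcases hx with rfl | rfl <;> simp [σ_inv, σ_of]
  have hσy : σ 0 y = 0 := by
    rcases hy with rfl | rfl <;> simp [σ_inv, σ_of]
  obtain ⟨m, n, hm, hn, h0⟩ := hp.exists_σ_eq hσy
  have hσ_conj {s t : FreeGroup (Fin 2)} (hst : s = g * t * g⁻¹ ∨ s = (g * t * g⁻¹)⁻¹)
      (hs : σ 0 s = 0) : σ 0 t = 0 := by
    rcases hst with rfl | rfl <;> simp only [σ_mul, σ_inv] at hs <;> omega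
  rcases h with ⟨hu, hv⟩ | ⟨hv, -⟩
  swap
  · have hz := hσ_conj hv hσ
    rw [hm, mul_eq_zero] at hz
    omega
  have hz := hσ_conj hv hσ
  rw [hn, mul_eq_zero] at hz
  obtain ⟨rfl, k, rfl⟩ := h0 (by simpa [hσx] using hz)
  obtain ⟨ε, hε, rfl⟩ := exists_zpow_of_eq_or_eq_inv hx
  obtain ⟨δ, hδ, rfl⟩ := exists_zpow_of_eq_or_eq_inv hy
  obtain ⟨δ', hδ', hv⟩ : ∃ δ' : ℤ, (δ' = 1 ∨ δ' = -1) ∧ v = g * of 1 ^ δ' * g⁻¹ := by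
    rcases hv with rfl | rfl
    · exact ⟨δ, hδ, rfl⟩
    · exact ⟨-δ, by omega, by group⟩
  rcases hu with rfl | rfl
  · exact ⟨ε, δ', δ * k, g, hε, hδ', by group, by rw [hv]; group⟩
  · refine ⟨-ε, δ', -(δ * k), g * of 1 ^ (-(δ * k)), by omega, hδ', by group, ?_⟩
    rw [hv]
    group

end ExponentSum

theorem statement_6 (rels : Set (FreeGroup (Fin 2)))
    (h0 : ∀ R ∈ rels, σ 0 R = 0)
    (hnd : ¬ rels ⊆ ↑(commutator (FreeGroup (Fin 2))))
    (ψ : MulAut (PresentedGroup rels))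
    (htame : NielsenEquiv (fun i => ψ (PresentedGroup.of i))
      (fun i => (PresentedGroup.of i : PresentedGroup rels))) :
    ∃ (ε₀ ε₁ k : ℤ) (g : PresentedGroup rels),
      (ε₀ = 1 ∨ ε₀ = -1) ∧ (ε₁ = 1 ∨ ε₁ = -1) ∧
      g⁻¹ * ψ (PresentedGroup.of 0) * g =
        (PresentedGroup.of (0 : Fin 2) : PresentedGroup rels) ^ ε₀ *
          (PresentedGroup.of (1 : Fin 2) : PresentedGroup rels) ^ k ∧
      g⁻¹ * ψ (PresentedGroup.of 1) * g =
        (PresentedGroup.of (1 : Fin 2) : PresentedGroup rels) ^ ε₁ := by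
  obtain ⟨φ, hφ⟩ := htame
  let π := PresentedGroup.mk rels
  have hlift : FreeGroup.lift (fun i => ψ (PresentedGroup.of i : PresentedGroup rels)) =
      ψ.toMonoidHom.comp π := by
    ext i
    simp [π, PresentedGroup.of]
  have hcomp : (ψ.toMonoidHom.comp π).comp φ.toMonoidHom = π := by
    ext i
    have := hφ i
    rw [hlift] at this
    exact this
  have hψ (w : FreeGroup (Fin 2)) : ψ (π w) = π (φ.symm w) := by
    simpa using DFunLike.congr_fun hcomp (φ.symm w)
  have hσ1 : ∃ R ∈ rels, σ 1 R ≠ 0 := by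
    by_contra! h1
    exact hnd fun R hR => mem_commutator_of_σ_eq_zero (h0 R hR) (h1 R hR)
  have hσπ {w : FreeGroup (Fin 2)} (hw : π w = 1) : σ 0 w = 0 := by
    have hle : Subgroup.normalClosure rels ≤ (expSum 0).ker :=
      Subgroup.normalClosure_le_normal fun R hR => by
        simpa [MonoidHom.mem_ker, σ] using h0 R hR
    have := hle (PresentedGroup.mk_eq_one_iff.1 hw)
    rw [MonoidHom.mem_ker] at this
    simp [σ, this]
  have hσ : σ 0 (φ.symm (FreeGroup.of 1)) = 0 := by
    obtain ⟨R, hR, hR1⟩ := hσ1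
    have hz : σ 0 (φ.symm R) = 0 := by
      apply hσπ
      rw [← hψ, PresentedGroup.one_of_mem hR, map_one]
    have hlin := congrArg Multiplicative.toAdd
      (map_eq_zpow_σ_mul_zpow_σ ((expSum 0).comp φ.symm.toMonoidHom) R)
    simp only [h0 R hR, zpow_zero, one_mul, toAdd_zpow] at hlin
    have hmul : σ 1 R • σ 0 (φ.symm (FreeGroup.of 1)) = 0 := hlin.symm.trans hz
    exact (smul_eq_zero.1 hmul).resolve_left hR1
  have hcl : Subgroup.closure {φ.symm (FreeGroup.of 0), φ.symm (FreeGroup.of 1)} = ⊤ := by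
    have himage : ({φ.symm (FreeGroup.of 0), φ.symm (FreeGroup.of 1)} : Set _) =
        φ.symm.toMonoidHom '' Set.range FreeGroup.of := by
      ext w
      simp [Fin.exists_fin_two, eq_comm]
    rw [himage, ← MonoidHom.map_closure, FreeGroup.closure_range_of, ← MonoidHom.range_eq_map,
      MonoidHom.range_eq_top]
    exact φ.symm.surjective
  obtain ⟨ε₀, ε₁, k, g, hε₀, hε₁, hu, hv⟩ :=
    (standardPair_of_closure_eq_top _ _ hcl).exists_conj_eq hσ
  refine ⟨ε₀, ε₁, k, π g, hε₀, hε₁, ?_, ?_⟩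
  · have := congrArg π hu
    simp only [map_mul, map_inv, map_zpow, ← hψ] at this
    exact this
  · have := congrArg π hv
    simp only [map_mul, map_inv, map_zpow, ← hψ] at this
    exact this
end

section
/- Let G = ⟨a, b; Rⁿ⟩ with n > 1 and σ_a(R) = 0, R cyclically reduced. Then the centralizer of b in G is the cyclic subgroup generated by b: C_G(b) = ⟨b⟩. -/
/-- `w` is cyclically reduced: the last letter of its reduced word is not the
inverse of the first letter. -/
def CyclicallyReduced (w : FreeGroup (Fin 2)) : Prop :=
  ∀ x ∈ w.toWord.head?, ∀ y ∈ w.toWord.getLast?, x.1 = y.1 → x.2 = y.2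

namespace OneRelator

/-- The subgroup of the free group generated by the letters other than `x`. -/
def avoid {X : Type} (x : X) : Subgroup (FreeGroup X) :=
  Subgroup.closure (Set.image FreeGroup.of {x}ᶜ)

/-- The normal closure of the `k`-th power of the element spelled by `L`. -/
def rel {X : Type} (L : List (X × Bool)) (k : ℕ) : Subgroup (FreeGroup X) :=
  Subgroup.normalClosure {FreeGroup.mk L ^ k}

instance {X : Type} (L : List (X × Bool)) (k : ℕ) : (rel L k).Normal :=
  Subgroup.normalClosure_normal

lemma of_mem_avoid {X : Type} {x w : X} (h : w ≠ x) : FreeGroup.of w ∈ avoid x :=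
  Subgroup.subset_closure ⟨w, h, rfl⟩

lemma rel_le_rel_one {X : Type} (L : List (X × Bool)) (k : ℕ) : rel L k ≤ rel L 1 := by
  refine Subgroup.normalClosure_le_normal ?_
  rintro _ rfl
  have h : FreeGroup.mk L ^ 1 ∈ rel L 1 := Subgroup.subset_normalClosure rfl
  rw [pow_one] at h
  exact pow_mem h k

/-- A homomorphism kills `rel L k` as soon as it kills the relator. -/
lemma map_eq_one_of_mem_rel {X P : Type} [Group P] {L : List (X × Bool)} {k : ℕ}
    (f : FreeGroup X →* P) (hf : f (FreeGroup.mk L) ^ k = 1) {g : FreeGroup X}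
    (hg : g ∈ rel L k) : f g = 1 := by
  have : rel L k ≤ f.ker := by
    refine Subgroup.normalClosure_le_normal ?_
    rintro _ rfl
    rw [SetLike.mem_coe, MonoidHom.mem_ker, map_pow, hf]
  exact this hg

/-- Freiheitssatz for the subgroup omitting `x`, together with triviality modulo the relator power
of the elements of `rel L 1` commuting with a nontrivial element of that subgroup. -/
structure Good {X : Type} (n : ℕ) (L : List (X × Bool)) (x : X) : Prop where
  free : ∀ y ∈ avoid x, y ∈ rel L 1 → y = 1
  cent : ∀ g ∈ rel L 1, ∀ y ∈ avoid x, y ≠ 1 → g * y * g⁻¹ * y⁻¹ ∈ rel L n → g ∈ rel L n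

lemma perm_apply_inv {α : Type} (e : Equiv.Perm α) (a : α) : e (e⁻¹ a) = a :=
  e.apply_symm_apply a

section Fox

attribute [local instance] Finsupp.comapDistribMulAction

/-- The affine action of the free group on the group ring attached to the Fox derivative
with respect to `x`. -/
noncomputable def fox {X Q : Type} [Group Q] [DecidableEq X] (n : ℕ) (q : FreeGroup X →* Q) (x : X) :
    FreeGroup X →* Equiv.Perm (Q →₀ ZMod n) :=
  FreeGroup.lift fun w =>
    if w = x then (Equiv.addRight (Finsupp.single (1 : Q) (1 : ZMod n)))⁻¹ *
      MulAction.toPermHom Q (Q →₀ ZMod n) (q (FreeGroup.of w)) *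
        Equiv.addRight (Finsupp.single (1 : Q) (1 : ZMod n))
    else MulAction.toPermHom Q (Q →₀ ZMod n) (q (FreeGroup.of w))

variable {X Q : Type} [Group Q] [DecidableEq X] (n : ℕ) (q : FreeGroup X →* Q) (x : X)

lemma fox_of_self (m : Q →₀ ZMod n) : fox n q x (FreeGroup.of x) m =
    q (FreeGroup.of x) • (m + Finsupp.single 1 1) - Finsupp.single 1 1 := by
  simp [fox, sub_eq_add_neg]

lemma fox_of_ne {w : X} (h : w ≠ x) (m : Q →₀ ZMod n) :
    fox n q x (FreeGroup.of w) m = q (FreeGroup.of w) • m := by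
  simp [fox, h]

lemma fox_apply (g : FreeGroup X) (m : Q →₀ ZMod n) :
    fox n q x g m = q g • m + fox n q x g 0 := by
  have inv : ∀ g : FreeGroup X, (∀ m, fox n q x g m = q g • m + fox n q x g 0) →
      ∀ m, fox n q x g⁻¹ m = q g⁻¹ • m + fox n q x g⁻¹ 0 := by
    intro g h m
    apply (fox n q x g).injective
    rw [h (_ + _), smul_add, map_inv, map_inv, smul_inv_smul, perm_apply_inv, add_assoc,
      ← h, perm_apply_inv, add_zero]
  have gen : ∀ w : X, ∀ m, fox n q x (FreeGroup.of w) m =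
      q (FreeGroup.of w) • m + fox n q x (FreeGroup.of w) 0 := by
    intro w m
    by_cases h : w = x
    · subst h
      simp only [fox_of_self, smul_add]
      simp [add_sub_assoc]
    · simp [fox_of_ne n q x h]
  induction g generalizing m with
  | C1 => simp
  | of w => exact gen w m
  | inv_of w _ => exact inv _ (gen w) m
  | mul g h ih1 ih2 =>
    rw [map_mul, Equiv.Perm.mul_apply, Equiv.Perm.mul_apply, ih1, ih1 (fox n q x h 0), ih2 m,
      map_mul, mul_smul, smul_add, add_assoc]

lemma fox_apply_of_mem {y : FreeGroup X} (hy : y ∈ avoid x) (m : Q →₀ ZMod n) :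
    fox n q x y m = q y • m := by
  induction hy using Subgroup.closure_induction generalizing m with
  | mem y h => obtain ⟨w, hw, rfl⟩ := h; exact fox_of_ne n q x hw m
  | one => simp
  | mul a b _ _ h1 h2 => rw [map_mul, Equiv.Perm.mul_apply, h2, h1, map_mul, mul_smul]
  | inv a _ h =>
    apply (fox n q x a).injective
    rw [h (q _ • m), map_inv, map_inv, smul_inv_smul, perm_apply_inv]

lemma mapDomain_fox (g : FreeGroup X) (m : Q →₀ ZMod n) :
    Finsupp.mapDomain ((↑) : Q → Q ⧸ (avoid x).map q) (fox n q x g m) +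
        Finsupp.single ((1 : Q) : Q ⧸ (avoid x).map q) 1 =
      q g • (Finsupp.mapDomain ((↑) : Q → Q ⧸ (avoid x).map q) m +
        Finsupp.single ((1 : Q) : Q ⧸ (avoid x).map q) 1) := by
  have smul : ∀ (a : Q) (m : Q →₀ ZMod n),
      Finsupp.mapDomain ((↑) : Q → Q ⧸ (avoid x).map q) (a • m) =
        a • Finsupp.mapDomain ((↑) : Q → Q ⧸ (avoid x).map q) m := by
    intro a m
    rw [Finsupp.comapSMul_def, Finsupp.comapSMul_def, ← Finsupp.mapDomain_comp,
      ← Finsupp.mapDomain_comp]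
    rfl
  induction g generalizing m with
  | C1 => simp
  | of w =>
    by_cases h : w = x
    · subst h
      rw [fox_of_self, sub_eq_add_neg, Finsupp.mapDomain_add, smul, Finsupp.mapDomain_add,
        ← Finsupp.single_neg, Finsupp.mapDomain_single, Finsupp.mapDomain_single,
        Finsupp.single_neg, neg_add_cancel_right]
    · rw [fox_of_ne n q x h, smul, smul_add, Finsupp.comapSMul_single]
      congr 2
      rw [MulAction.Quotient.smul_coe, QuotientGroup.eq]
      simpa using Subgroup.mem_map_of_mem q (of_mem_avoid h)
  | inv_of w ih =>
    have := ih (fox n q x (FreeGroup.of w)⁻¹ m)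
    rw [← Equiv.Perm.mul_apply, ← map_mul, mul_inv_cancel, map_one, Equiv.Perm.one_apply] at this
    rw [this, ← mul_smul, ← map_mul, inv_mul_cancel, map_one, one_smul]
  | mul g h ih1 ih2 => rw [map_mul, Equiv.Perm.mul_apply, ih1, ih2, map_mul, mul_smul]

/-- If `g` conjugates `y` to `y'` modulo a subgroup acting trivially, with `y`, `y'` free of `x`,
and `y'` has infinite order in the image, then the image of `g` is free of `x`. -/
theorem exists_mem_avoid_of_conj (hn : 1 < n) {K : Subgroup (FreeGroup X)}
    (hK : ∀ r ∈ K, fox n q x r = 1)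
    {g y y' : FreeGroup X} (hy : y ∈ avoid x) (hy' : y' ∈ avoid x)
    (h : g * y * g⁻¹ * y'⁻¹ ∈ K) (hord : ¬IsOfFinOrder (q y')) :
    ∃ f ∈ avoid x, q f = q g := by
  have : Fact (1 < n) := ⟨hn⟩
  set m := fox n q x g 0 with hm
  have hfix : q y' • m = m := by
    have h1 := hK _ h
    have h2 : g * y = (g * y * g⁻¹ * y'⁻¹) * (y' * g) := by group
    have h3 := congrArg (fun z => fox n q x z 0) h2
    simp only [map_mul _ (g * y * g⁻¹ * y'⁻¹), h1, one_mul] at h3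
    simp only [map_mul, Equiv.Perm.mul_apply] at h3
    rw [fox_apply_of_mem n q x hy, fox_apply_of_mem n q x hy', smul_zero] at h3
    exact h3.symm
  have hm0 : m = 0 := by
    by_contra hne
    obtain ⟨a, ha⟩ := Finsupp.support_nonempty_iff.mpr hne
    have hpow : ∀ j : ℕ, q y' ^ j • m = m := by
      intro j
      induction j with
      | zero => simp
      | succ j ih => rw [pow_succ, mul_smul, hfix, ih]
    have hmem : ∀ j : ℕ, q y' ^ j * a ∈ m.support := by
      intro j
      rw [Finsupp.mem_support_iff] at ha ⊢
      rw [← hpow j, Finsupp.comapSMul_apply]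
      simpa using ha
    have hinj : Function.Injective fun j : ℕ => q y' ^ j * a := by
      intro i j hij
      exact injective_pow_iff_not_isOfFinOrder.mpr hord (mul_right_cancel hij)
    exact Set.infinite_of_injective_forall_mem hinj hmem m.support.finite_toSet
  have h1 := mapDomain_fox n q x g 0
  rw [← hm, hm0, Finsupp.mapDomain_zero, zero_add, Finsupp.comapSMul_single] at h1
  have h2 := (Finsupp.single_left_inj one_ne_zero).mp h1
  rw [MulAction.Quotient.smul_coe, QuotientGroup.eq] at h2
  simpa using h2

end Fox
end OneRelator

namespace OneRelator

lemma fox_of_self_zpow {X Q : Type} [Group Q] [DecidableEq X] (n : ℕ) (q : FreeGroup X →* Q)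
    (x : X) (k : ℤ) (h : q (FreeGroup.of x ^ k) = 1) : fox n q x (FreeGroup.of x ^ k) = 1 := by
  have conj : ∀ {G : Type} [Group G] (a b : G), b ^ k = 1 → (a⁻¹ * b * a) ^ k = 1 := by
    intro G _ a b hb
    have := conj_zpow (i := k) (a := a⁻¹) (b := b)
    rw [inv_inv, hb] at this
    simpa using this
  rw [map_zpow, fox, FreeGroup.lift_apply_of, if_pos rfl]
  refine conj _ _ ?_
  rw [← map_zpow, ← map_zpow, h, map_one]

/-- A nontrivial element free of `x` has infinite order modulo any subgroup of `rel L 1`. -/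
lemma not_isOfFinOrder_of_free {X : Type} {L : List (X × Bool)} {x : X}
    (hfree : ∀ y ∈ avoid x, y ∈ rel L 1 → y = 1) {k : ℕ} {y : FreeGroup X} (hy : y ∈ avoid x)
    (hy1 : y ≠ 1) : ¬IsOfFinOrder (QuotientGroup.mk' (rel L k) y) := by
  rw [isOfFinOrder_iff_pow_eq_one]
  rintro ⟨j, hj, h⟩
  rw [← map_pow, QuotientGroup.mk'_apply, QuotientGroup.eq_one_iff] at h
  have h1 := hfree _ (pow_mem hy j) (rel_le_rel_one L k h)
  exact hy1 (pow_left_injective hj.ne' (by simpa using h1))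

/-- The subgroup omitting `x` is malnormal modulo the relator. -/
theorem Good.malnormal {X : Type} {n : ℕ} (hn : 1 < n) {L : List (X × Bool)} {x : X}
    (hG : Good n L x) {g y y' : FreeGroup X} (hy : y ∈ avoid x) (hy1 : y ≠ 1)
    (hy' : y' ∈ avoid x) (h : g * y * g⁻¹ * y'⁻¹ ∈ rel L n) :
    ∃ f ∈ avoid x, f⁻¹ * g ∈ rel L n := by
  classical
  have hy'1 : y' ≠ 1 := by
    rintro rfl
    have h1 : g * y * g⁻¹ ∈ rel L 1 := by simpa using rel_le_rel_one L n h
    rw [← Subgroup.Normal.mem_comm_iff inferInstance] at h1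
    exact hy1 (hG.free y hy (by simpa using h1))
  set q := QuotientGroup.mk' (rel L 1) with hq
  obtain ⟨f, hf, hfg⟩ := exists_mem_avoid_of_conj n q x hn (K := rel L n) (fun r hr => by
      refine map_eq_one_of_mem_rel _ ?_ hr
      have hS : q (FreeGroup.mk L) = 1 := by
        rw [hq, QuotientGroup.mk'_apply, QuotientGroup.eq_one_iff]
        exact Subgroup.subset_normalClosure (by simp)
      have hpow : ∀ j : ℕ, ∀ m, (fox n q x (FreeGroup.mk L) ^ j) m =
          m + j • fox n q x (FreeGroup.mk L) 0 := by
        intro j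
        induction j with
        | zero => simp
        | succ j ih =>
          intro m
          rw [pow_succ', Equiv.Perm.mul_apply, fox_apply, hS, one_smul, ih, succ_nsmul, add_assoc]
      ext1 m
      rw [hpow, ← Nat.cast_smul_eq_nsmul (ZMod n), ZMod.natCast_self, zero_smul, add_zero]
      rfl)
    hy hy' h (not_isOfFinOrder_of_free hG.free hy' hy'1)
  have hk : f⁻¹ * g ∈ rel L 1 := by
    rw [← QuotientGroup.eq]; exact hfg
  have hmem : f⁻¹ * y' * f ∈ avoid x := mul_mem (mul_mem (inv_mem hf) hy') hf
  have h2 : (f⁻¹ * g) * y * (f⁻¹ * g)⁻¹ * (f⁻¹ * y' * f)⁻¹ ∈ rel L n := by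
    have := Subgroup.Normal.conj_mem (inferInstance : (rel L n).Normal) _ h f⁻¹
    convert this using 1
    group
  have h3 : y * (f⁻¹ * y' * f)⁻¹ = 1 := by
    refine hG.free _ (mul_mem hy (inv_mem hmem)) ?_
    have aux : ∀ u v : FreeGroup X, u ∈ rel L 1 → u * y * u⁻¹ * v⁻¹ ∈ rel L 1 →
        y * v⁻¹ ∈ rel L 1 := by
      intro u v hu huv
      rw [← QuotientGroup.eq_one_iff] at hu huv ⊢
      simpa [QuotientGroup.mk_mul, hu] using huv
    exact aux _ _ hk (rel_le_rel_one L n h2)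
  rw [mul_inv_eq_one] at h3
  rw [← h3] at h2
  exact ⟨f, hf, hG.cent _ hk y hy hy1 h2⟩

lemma mk_cons {X : Type} (p : X × Bool) (L : List (X × Bool)) :
    FreeGroup.mk (p :: L) = FreeGroup.mk [p] * FreeGroup.mk L := by
  rw [FreeGroup.mul_mk]; rfl

lemma mk_singleton_false {X : Type} (w : X) : FreeGroup.mk [(w, false)] = (FreeGroup.of w)⁻¹ := by
  rw [FreeGroup.of, FreeGroup.inv_mk]; rfl

lemma mk_mem_zpowers {X : Type} {x : X} {L : List (X × Bool)} (h : ∀ p ∈ L, p.1 = x) :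
    FreeGroup.mk L ∈ Subgroup.zpowers (FreeGroup.of x) := by
  induction L with
  | nil => exact one_mem _
  | cons p L ih =>
    rw [mk_cons]
    refine mul_mem ?_ (ih fun p hp => h p (List.mem_cons_of_mem _ hp))
    obtain ⟨w, b⟩ := p
    obtain rfl : w = x := h _ List.mem_cons_self
    cases b
    · rw [mk_singleton_false]
      exact inv_mem (Subgroup.mem_zpowers _)
    · exact Subgroup.mem_zpowers _

/-- A homomorphism fixing all letters other than `x` fixes the subgroup omitting `x`. -/
lemma hom_eq_of_mem_avoid {X P : Type} [Group P] {x : X} {f g : FreeGroup X →* P}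
    (h : ∀ w, w ≠ x → f (FreeGroup.of w) = g (FreeGroup.of w)) {y : FreeGroup X}
    (hy : y ∈ avoid x) : f y = g y := by
  have : avoid x ≤ f.eqLocus g := by
    rw [avoid, Subgroup.closure_le]
    rintro _ ⟨w, hw, rfl⟩
    exact h w hw
  exact this hy

theorem good_of_forall_eq {X : Type} {n : ℕ} (hn : 1 < n) {L : List (X × Bool)} {x : X}
    (h : ∀ p ∈ L, p.1 = x) : Good n L x := by
  classical
  obtain ⟨k, hk⟩ := mk_mem_zpowers h
  simp only at hk
  have hfree : ∀ y ∈ avoid x, y ∈ rel L 1 → y = 1 := by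
    intro y hy hyr
    let f : FreeGroup X →* FreeGroup X :=
      FreeGroup.lift fun w => if w = x then 1 else FreeGroup.of w
    have h1 : f y = MonoidHom.id _ y := hom_eq_of_mem_avoid (fun w hw => by simp [f, hw]) hy
    have h2 : f y = 1 := map_eq_one_of_mem_rel f (by rw [← hk]; simp [f]) hyr
    rw [h1] at h2
    exact h2
  refine ⟨hfree, fun g hg y hy hy1 hc => ?_⟩
  set q := QuotientGroup.mk' (rel L n) with hq
  have hSn : q (FreeGroup.mk L ^ n) = 1 := by
    rw [hq, QuotientGroup.mk'_apply, QuotientGroup.eq_one_iff]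
    exact Subgroup.subset_normalClosure rfl
  obtain ⟨f, hf, hfg⟩ := exists_mem_avoid_of_conj n q x hn (K := rel L n) (fun r hr => by
      refine map_eq_one_of_mem_rel _ ?_ hr
      rw [← map_pow]
      rw [← hk, ← zpow_natCast, ← zpow_mul] at hSn ⊢
      exact fox_of_self_zpow n q x _ hSn)
    hy hy hc (not_isOfFinOrder_of_free hfree hy hy1)
  have hfg' : f⁻¹ * g ∈ rel L n := by rw [← QuotientGroup.eq]; exact hfg
  have hf1 : f⁻¹ ∈ rel L 1 := by
    have := mul_mem (rel_le_rel_one L n hfg') (inv_mem hg)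
    simpa using this
  have : f⁻¹ = 1 := hfree _ (inv_mem hf) hf1
  simpa [this] using hfg'

end OneRelator

namespace OneRelator

section HNN
open HNNExtension HNNExtension.NormalWord

variable {H : Type} [Group H] {A B : Subgroup H} {φ : A ≃* B}

/-- The exponent sum of the stable letter. -/
def height (φ : A ≃* B) : HNNExtension H A B φ →* Multiplicative ℤ :=
  HNNExtension.lift 1 (Multiplicative.ofAdd 1) (by simp)

@[simp]
lemma height_of (h : H) : height φ (of h) = 1 := by simp [height]

@[simp]
lemma height_t : height φ t = Multiplicative.ofAdd 1 := by simp [height]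

/-- `g` is the product of a reduced word whose stable letters have the exponents `ε`. -/
def Rep (φ : A ≃* B) (g : HNNExtension H A B φ) (ε : List ℤˣ) : Prop :=
  ∃ w : ReducedWord H A B, w.prod φ = g ∧ w.toList.map Prod.fst = ε

lemma exists_rep (g : HNNExtension H A B φ) : ∃ ε, Rep φ g ε := by
  obtain ⟨d⟩ := TransversalPair.nonempty H A B
  exact ⟨_, ((equiv φ d) g).toReducedWord, (equiv φ d).symm_apply_apply g, rfl⟩

lemma Rep.unique {g : HNNExtension H A B φ} {ε ε' : List ℤˣ} (h : Rep φ g ε) (h' : Rep φ g ε') :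
    ε = ε' := by
  obtain ⟨w, hw, rfl⟩ := h
  obtain ⟨w', hw', rfl⟩ := h'
  exact (ReducedWord.map_fst_eq_and_of_prod_eq φ (hw.trans hw'.symm)).1

lemma rep_of (h : H) : Rep φ (of h) [] :=
  ⟨⟨h, [], List.isChain_nil⟩, by simp [ReducedWord.prod], rfl⟩

lemma Rep.eq_of {g : HNNExtension H A B φ} (h : Rep φ g []) : ∃ k, g = of k := by
  obtain ⟨⟨k, l, c⟩, rfl, hl⟩ := h
  obtain rfl : l = [] := by simpa using hl
  exact ⟨k, by simp [ReducedWord.prod]⟩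

lemma rep_t (u : ℤˣ) : Rep φ (t ^ (u : ℤ)) [u] :=
  ⟨⟨1, [(u, 1)], List.isChain_singleton _⟩, by simp [ReducedWord.prod], rfl⟩

/-- Right multiplication by an element of the base changes the last syllable only. -/
lemma exists_mul_of (l : List (ℤˣ × H)) (hl : l ≠ [])
    (hc : l.IsChain (fun a b => a.2 ∈ toSubgroup A B a.1 → a.1 = b.1)) (k : H) :
    ∃ l' : List (ℤˣ × H), l'.IsChain (fun a b => a.2 ∈ toSubgroup A B a.1 → a.1 = b.1) ∧
      l'.map Prod.fst = l.map Prod.fst ∧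
      (l'.map (fun x => (t : HNNExtension H A B φ) ^ (x.1 : ℤ) * of x.2)).prod =
        (l.map (fun x => t ^ (x.1 : ℤ) * of x.2)).prod * of k := by
  induction l with
  | nil => exact absurd rfl hl
  | cons a l ih =>
    rcases l with _ | ⟨b, l⟩
    · exact ⟨[(a.1, a.2 * k)], List.isChain_singleton _, rfl, by simp [mul_assoc]⟩
    · rw [List.isChain_cons_cons] at hc
      obtain ⟨l', h1, h2, h3⟩ := ih (by simp) hc.2
      refine ⟨a :: l', ?_, by simp [h2], ?_⟩
      · rcases l' with _ | ⟨b', l'⟩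
        · simp at h2
        · have hb : b'.1 = b.1 := by simpa using congrArg List.head? h2
          rw [List.isChain_cons_cons, hb]
          exact ⟨hc.1, h1⟩
      · rw [List.map_cons, List.prod_cons, h3, List.map_cons (l := b :: l), List.prod_cons,
          ← mul_assoc]

lemma Rep.mul_of {g : HNNExtension H A B φ} {ε : List ℤˣ} (h : Rep φ g ε) (k : H) :
    Rep φ (g * of k) ε := by
  obtain ⟨⟨h0, l, c⟩, rfl, rfl⟩ := h
  by_cases hl : l = []
  · subst hl
    simpa [ReducedWord.prod] using rep_of (φ := φ) (h0 * k)
  · obtain ⟨l', h1, h2, h3⟩ := exists_mul_of (φ := φ) l hl c k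
    exact ⟨⟨h0, l', h1⟩, by simp only [ReducedWord.prod, h3, mul_assoc], h2⟩

lemma Rep.mul {g g' : HNNExtension H A B φ} {ε ε' : List ℤˣ} (h : Rep φ g ε) (h' : Rep φ g' ε')
    (hj : ∀ a ∈ ε.getLast?, ∀ b ∈ ε'.head?, a = b) : Rep φ (g * g') (ε ++ ε') := by
  obtain ⟨⟨k, l', c'⟩, rfl, rfl⟩ := h'
  obtain ⟨⟨h0, l, c⟩, hp, rfl⟩ := h.mul_of k
  refine ⟨⟨h0, l ++ l', ?_⟩, ?_, by simp⟩
  · refine List.IsChain.append c c' ?_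
    intro x hx y hy _
    exact hj x.1 (by simp [Option.mem_def.mp hx])
      y.1 (by simp [Option.mem_def.mp hy])
  · simp only [ReducedWord.prod] at hp ⊢
    rw [List.map_append, List.prod_append, ← mul_assoc, hp, mul_assoc]

lemma Rep.pow {g : HNNExtension H A B φ} {m : ℕ} {u : ℤˣ} (h : Rep φ g (List.replicate m u))
    (k : ℕ) : Rep φ (g ^ k) (List.replicate (k * m) u) := by
  induction k with
  | zero => simpa using rep_of (φ := φ) 1
  | succ k ih =>
    rw [pow_succ, Nat.succ_mul, List.replicate_add]
    refine ih.mul h fun a ha b hb => ?_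
    rw [List.eq_of_mem_replicate (List.mem_of_mem_getLast? ha),
      List.eq_of_mem_replicate (List.mem_of_mem_head? hb)]

lemma rep_t_zpow (u : ℤˣ) (m : ℕ) : Rep φ (t ^ ((u : ℤ) * m)) (List.replicate m u) := by
  have := Rep.pow (m := 1) (rep_t (φ := φ) u) m
  rwa [mul_one, ← zpow_natCast, ← zpow_mul] at this

lemma Rep.height_eq {g : HNNExtension H A B φ} {ε : List ℤˣ} (h : Rep φ g ε) :
    height φ g = Multiplicative.ofAdd (ε.map (fun u : ℤˣ => (u : ℤ))).sum := by
  obtain ⟨⟨h0, l, c⟩, rfl, rfl⟩ := h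
  simp only [ReducedWord.prod, map_mul, height_of, one_mul]
  clear c
  induction l with
  | nil => simp
  | cons a l ih =>
    simp only [List.map_cons, List.prod_cons, map_mul, ih, List.sum_cons, ofAdd_add, map_zpow,
      height_t, height_of, mul_one]
    rw [← ofAdd_zsmul, smul_eq_mul, mul_one]

/-- An element of height zero commuting with an element whose exponents are all equal lies in the
base group. -/
lemma eq_of_of_commute {z g : HNNExtension H A B φ} {u : ℤˣ} {m : ℕ} (hm : 0 < m)
    (hz : Rep φ z (List.replicate m u)) (hz' : Rep φ z⁻¹ (List.replicate m (-u)))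
    (hc : z * g = g * z) (hg : height φ g = 1) : ∃ k, g = of k := by
  obtain ⟨ε, hε⟩ := exists_rep g
  by_cases hnil : ε = []
  · subst hnil; exact hε.eq_of
  exfalso
  have hpow : ∀ (y : HNNExtension H A B φ), y * g = g * y → ∀ k : ℕ, y ^ k * g = g * y ^ k :=
    fun y hy k => (Commute.pow_left (show Commute y g from hy) k)
  have hc' : z⁻¹ * g = g * z⁻¹ := (Commute.inv_left (show Commute z g from hc))
  have same : ∀ (y : HNNExtension H A B φ) (v : ℤˣ), Rep φ y (List.replicate m v) → y * g = g * y →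
      (∀ b ∈ ε.head?, v = b) → (∀ a ∈ ε.getLast?, a = v) → False := by
    intro y v hy hcy hh hl
    have e1 := (hy.pow ε.length).mul hε (fun a ha b hb => by
      rw [List.eq_of_mem_replicate (List.mem_of_mem_getLast? ha)]; exact hh b hb)
    have e2 := hε.mul (hy.pow ε.length) (fun a ha b hb => by
      rw [List.eq_of_mem_replicate (List.mem_of_mem_head? hb)]; exact hl a ha)
    rw [hpow y hcy] at e1
    have e3 := congrArg (List.take ε.length) (e2.unique e1)
    rw [List.take_append_of_le_length le_rfl, List.take_length,
      List.take_append_of_le_length (by simp; nlinarith), List.take_replicate] at e3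
    have e4 := hε.height_eq
    rw [hg, e3] at e4
    simp only [List.map_replicate, List.sum_replicate] at e4
    have e5 := congrArg Multiplicative.toAdd e4
    have hlen : 0 < ε.length := List.length_pos_iff.mpr hnil
    rw [toAdd_one, toAdd_ofAdd, nsmul_eq_mul, eq_comm, mul_eq_zero] at e5
    rcases e5 with e5 | e5
    · have : min ε.length (ε.length * m) = ε.length := min_eq_left (by nlinarith)
      rw [this] at e5
      exact hlen.ne' (by exact_mod_cast e5)
    · exact v.ne_zero e5
  have diff : ∀ (y : HNNExtension H A B φ) (v : ℤˣ), Rep φ y (List.replicate m v) →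
      Rep φ y⁻¹ (List.replicate m (-v)) → y * g = g * y →
      (∀ b ∈ ε.head?, v = b) → (∀ a ∈ ε.getLast?, a = -v) → False := by
    intro y v hy hy' hcy hh hl
    have e1 := (hy.mul hε (fun a ha b hb => by
      rw [List.eq_of_mem_replicate (List.mem_of_mem_getLast? ha)]; exact hh b hb)).mul hy'
        (fun a ha b hb => by
          rw [List.eq_of_mem_replicate (List.mem_of_mem_head? hb)]
          rw [List.getLast?_append_of_ne_nil _ hnil] at ha
          exact hl a ha)
    rw [hcy, mul_inv_cancel_right] at e1
    have := congrArg List.length (hε.unique e1)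
    simp at this
    omega
  have hu : ∀ a : ℤˣ, a = u ∨ a = -u := by
    intro a
    rcases Int.units_eq_one_or a with rfl | rfl <;> rcases Int.units_eq_one_or u with rfl | rfl <;>
      simp
  have hh : ε.head? = some (ε.head hnil) := List.head?_eq_some_head hnil
  have hl : ε.getLast? = some (ε.getLast hnil) := List.getLast?_eq_some_getLast hnil
  rcases hu (ε.head hnil) with h1 | h1 <;> rcases hu (ε.getLast hnil) with h2 | h2
  · exact same z u hz hc (by simp [hh, h1]) (by simp [hl, h2])
  · exact diff z u hz hz' hc (by simp [hh, h1]) (by simp [hl, h2])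
  · exact diff z⁻¹ (-u) hz' (by simpa using hz) hc' (by simp [hh, h1]) (by simp [hl, h2])
  · exact same z⁻¹ (-u) hz' hc' (by simp [hh, h1]) (by simp [hl, h2])

/-- If conjugating `of h` by a nontrivial power of `t` stays in the base, then `h` lies in the
corresponding associated subgroup. -/
lemma mem_of_conj_t {u : ℤˣ} {m : ℕ} (hm : 0 < m) {h k : H}
    (hc : (t : HNNExtension H A B φ) ^ ((u : ℤ) * m) * of h = of k * t ^ ((u : ℤ) * m)) :
    h ∈ toSubgroup A B u := by
  by_contra hh
  obtain ⟨m, rfl⟩ : ∃ j, m = j + 1 := ⟨m - 1, by omega⟩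
  let w : ReducedWord H A B := ⟨1, List.replicate m (u, 1) ++ (u, h) :: List.replicate (m + 1) (-u, 1),
    by
      refine List.IsChain.append ?_ ?_ ?_
      · exact List.isChain_replicate_of_rel _ (fun _ => rfl)
      · rw [List.isChain_cons]
        refine ⟨fun y _ hy => absurd hy hh, List.isChain_replicate_of_rel _ (fun _ => rfl)⟩
      · intro x hx y hy _
        rw [List.eq_of_mem_replicate (List.mem_of_mem_getLast? hx)]
        simp only [List.head?_cons, Option.mem_def, Option.some.injEq] at hy
        rw [← hy]⟩
  have hw : w.prod φ = of k := by
    have : w.prod φ = t ^ ((u : ℤ) * (m + 1 : ℕ)) * of h * (t ^ ((u : ℤ) * (m + 1 : ℕ)))⁻¹ := by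
      simp only [w, ReducedWord.prod, map_one, one_mul, List.map_append, List.map_replicate,
        List.prod_append, List.prod_replicate, List.map_cons, List.prod_cons, mul_one]
      rw [← zpow_natCast, ← zpow_natCast, ← zpow_mul, ← zpow_mul, ← zpow_neg, ← mul_assoc,
        ← mul_assoc, ← zpow_add]
      congr 3
      · push_cast; ring
      · push_cast; ring
    rw [this, hc, mul_inv_cancel_right]
  have := ReducedWord.toList_eq_nil_of_mem_of_range φ w ⟨k, hw.symm⟩
  simp [w] at this

lemma exists_of_mul_t (u : ℤˣ) {h : H} (hh : h ∈ toSubgroup A B (-u)) :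
    ∃ h' ∈ toSubgroup A B u, (of h : HNNExtension H A B φ) * t ^ (u : ℤ) = t ^ (u : ℤ) * of h' := by
  rcases Int.units_eq_one_or u with rfl | rfl
  · exact ⟨φ.symm ⟨h, hh⟩, (φ.symm ⟨h, hh⟩).2, by simpa using of_mul_t (φ := φ) ⟨h, hh⟩⟩
  · rw [neg_neg] at hh
    exact ⟨φ ⟨h, hh⟩, (φ ⟨h, hh⟩).2, by simpa using of_mul_inv_t (φ := φ) ⟨h, hh⟩⟩

lemma signs_of_conj {V : Set H}
    (hshift : ∀ v ∈ V, ∀ u : ℤˣ, ∃ v' ∈ V,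
      (of v : HNNExtension H A B φ) * t ^ (u : ℤ) = t ^ (u : ℤ) * of v')
    (hmal : ∀ v ∈ V, ∀ (u : ℤˣ) (h : H), h⁻¹ * v * h ∈ toSubgroup A B u → h ∈ toSubgroup A B u)
    (l : List (ℤˣ × H)) (hc : l.IsChain (fun a b => a.2 ∈ toSubgroup A B a.1 → a.1 = b.1))
    (h0 v k : H) (hv : v ∈ V)
    (hcom : (of v : HNNExtension H A B φ) *
        (of h0 * (l.map (fun x => t ^ (x.1 : ℤ) * of x.2)).prod) =
      of h0 * (l.map (fun x => t ^ (x.1 : ℤ) * of x.2)).prod * of k) :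
    (∀ a ∈ l.head?, h0 ∈ toSubgroup A B (-a.1)) ∧ ∃ u : ℤˣ, ∀ a ∈ l, a.1 = u := by
  induction l generalizing h0 v with
  | nil => simp
  | cons a l ih =>
    obtain ⟨u, h1⟩ := a
    obtain ⟨l', g1, g2, g3⟩ := exists_mul_of (φ := φ) ((u, h1) :: l) (by simp) hc k
    have hw := ReducedWord.map_fst_eq_and_of_prod_eq φ
      (w₁ := ⟨v * h0, (u, h1) :: l, hc⟩) (w₂ := ⟨h0, l', g1⟩) (by
        simp only [ReducedWord.prod]
        rw [g3, map_mul, mul_assoc, hcom, mul_assoc])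
    have hm := hw.2 u (by simp)
    simp only at hm
    have hm' : h0⁻¹ * v * h0 ∈ toSubgroup A B (-u) := by
      rw [← inv_mem_iff]; convert hm using 1; group
    have hh0 := hmal v hv _ _ hm'
    refine ⟨by simpa using hh0, ?_⟩
    obtain ⟨h0', hh0', e0⟩ := exists_of_mul_t (φ := φ) u hh0
    obtain ⟨v', hv', e1⟩ := hshift v hv u
    rw [List.isChain_cons] at hc
    have := ih hc.2 (h0' * h1) v' hv' (by
      simp only [List.map_cons, List.prod_cons] at hcom
      apply mul_left_cancel (a := t ^ (u : ℤ))
      simp only [← mul_assoc, map_mul] at hcom ⊢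
      rw [← e1, mul_assoc (of v) (t ^ (u : ℤ)), ← e0, ← mul_assoc]
      exact hcom)
    rcases l with _ | ⟨b, l⟩
    · exact ⟨u, by simp⟩
    · obtain ⟨i1, u', i2⟩ := this
      have hb : b.1 = u' := i2 b (by simp)
      have hub : u = b.1 := by
        by_contra hne
        have hneg : b.1 = -u := by
          rcases Int.units_eq_one_or u with rfl | rfl <;>
            rcases Int.units_eq_one_or b.1 with h | h <;> simp_all
        have h2 := i1 b (by simp)
        rw [hneg, neg_neg] at h2
        exact hne (hc.1 b (by simp) ((Subgroup.mul_mem_cancel_left _ hh0').mp h2))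
      refine ⟨u, fun a ha => ?_⟩
      rcases List.mem_cons.mp ha with rfl | ha
      · rfl
      · rw [i2 a ha, hub, hb]

/-- An element of height zero conjugating an element of `V` into the base lies in the base. -/
lemma eq_of_of_conj {V : Set H}
    (hshift : ∀ v ∈ V, ∀ u : ℤˣ, ∃ v' ∈ V,
      (of v : HNNExtension H A B φ) * t ^ (u : ℤ) = t ^ (u : ℤ) * of v')
    (hmal : ∀ v ∈ V, ∀ (u : ℤˣ) (h : H), h⁻¹ * v * h ∈ toSubgroup A B u → h ∈ toSubgroup A B u)
    {g : HNNExtension H A B φ} (hg : height φ g = 1) {v k : H} (hv : v ∈ V)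
    (hcom : of v * g = g * of k) : ∃ h, g = of h := by
  obtain ⟨ε, hε⟩ := exists_rep g
  have hsum := hε.height_eq
  have hε' := hε
  obtain ⟨⟨h0, l, c⟩, rfl, rfl⟩ := hε
  obtain ⟨-, u, hu⟩ := signs_of_conj hshift hmal l c h0 v k hv hcom
  have hrep : l.map Prod.fst = List.replicate l.length u := by
    rw [List.eq_replicate_iff]
    simpa using fun a x hx => hu (a, x) hx
  rw [hg] at hsum
  simp only [hrep, List.map_replicate, List.sum_replicate] at hsum
  have e5 := congrArg Multiplicative.toAdd hsum
  rw [toAdd_one, toAdd_ofAdd, nsmul_eq_mul, eq_comm, mul_eq_zero, or_iff_left u.ne_zero] at e5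
  have : l = [] := by simpa using e5
  subst this
  exact ⟨h0, by simp [ReducedWord.prod]⟩

end HNN
end OneRelator

namespace OneRelator

/-- The weighted exponent of a letter. -/
def wt {X : Type} (c : X → ℤ) (p : X × Bool) : ℤ := if p.2 then c p.1 else -c p.1

/-- The weighted exponent sum of a word. -/
def ht {X : Type} (c : X → ℤ) (L : List (X × Bool)) : ℤ := (L.map (wt c)).sum

/-- The height at which a letter read at height `i` is rewritten. -/
def pos {X : Type} (c : X → ℤ) (i : ℤ) (p : X × Bool) : ℤ := if p.2 then i else i - c p.1

/-- Magnus rewriting: each letter is labelled by the height at which it is read, and the letters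
in `drop` are deleted. -/
def rew {X : Type} (c : X → ℤ) (drop : X → Bool) : ℤ → List (X × Bool) → List ((X × ℤ) × Bool)
  | _, [] => []
  | i, p :: L =>
    if drop p.1 then rew c drop (i + wt c p) L
    else ((p.1, pos c i p), p.2) :: rew c drop (i + wt c p) L

@[simp]
lemma ht_nil {X : Type} (c : X → ℤ) : ht c [] = 0 := rfl

lemma ht_cons {X : Type} (c : X → ℤ) (p : X × Bool) (L : List (X × Bool)) :
    ht c (p :: L) = wt c p + ht c L := rfl

lemma lift_mk_cons {X P : Type} [Group P] (f : X → P) (p : X × Bool) (L : List (X × Bool)) :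
    FreeGroup.lift f (FreeGroup.mk (p :: L)) =
      (if p.2 then f p.1 else (f p.1)⁻¹) * FreeGroup.lift f (FreeGroup.mk L) := by
  rw [mk_cons, map_mul]
  obtain ⟨w, b⟩ := p
  cases b
  · rw [mk_singleton_false]; simp
  · change FreeGroup.lift f (FreeGroup.of w) * _ = _
    simp

lemma rew_lift {X P : Type} [Group P] (c : X → ℤ) (drop : X → Bool) (τ : P) (v : X → P) (i : ℤ)
    (L : List (X × Bool)) :
    τ ^ i * FreeGroup.lift (fun w => if drop w then τ ^ c w else v w * τ ^ c w) (FreeGroup.mk L) =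
      FreeGroup.lift (fun p : X × ℤ => τ ^ p.2 * v p.1 * τ ^ (-p.2))
        (FreeGroup.mk (rew c drop i L)) * τ ^ (i + ht c L) := by
  induction L generalizing i with
  | nil => simp [rew, ← FreeGroup.one_eq_mk]
  | cons p L ih =>
    rw [ht_cons, ← add_assoc, lift_mk_cons, ← mul_assoc, rew]
    obtain ⟨w, b⟩ := p
    cases hd : drop w
    · cases b
      · simp only [wt, pos, Bool.false_eq_true, if_false]
        rw [lift_mk_cons, mul_assoc (ite _ _ _), ← ih]
        simp only [Bool.false_eq_true, if_false]
        group
      · simp only [wt, pos, Bool.false_eq_true, if_false, if_true]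
        rw [lift_mk_cons, mul_assoc (ite _ _ _), ← ih]
        simp only [if_true]
        group
    · cases b
      · simp only [wt, if_true, Bool.false_eq_true, if_false]
        rw [← ih, ← zpow_neg, ← zpow_add]
      · simp only [wt, if_true]
        rw [← ih, ← zpow_add]

lemma mem_rew {X : Type} {c : X → ℤ} {drop : X → Bool} {i : ℤ} {L : List (X × Bool)}
    {a : (X × ℤ) × Bool} (h : a ∈ rew c drop i L) : (a.1.1, a.2) ∈ L ∧ drop a.1.1 = false := by
  induction L generalizing i with
  | nil => simp [rew] at h
  | cons p L ih =>
    rw [rew] at h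
    split_ifs at h with hd
    · exact ⟨List.mem_cons_of_mem _ (ih h).1, (ih h).2⟩
    · rcases List.mem_cons.mp h with rfl | h
      · exact ⟨List.mem_cons_self, by simpa using hd⟩
      · exact ⟨List.mem_cons_of_mem _ (ih h).1, (ih h).2⟩

lemma exists_word_of_mem_avoid {X : Type} {x : X} {y : FreeGroup X} (hy : y ∈ avoid x) :
    ∃ L : List (X × Bool), FreeGroup.mk L = y ∧ ∀ p ∈ L, p.1 ≠ x := by
  induction hy using Subgroup.closure_induction with
  | mem y h =>
    obtain ⟨w, hw, rfl⟩ := h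
    exact ⟨[(w, true)], rfl, by simpa using hw⟩
  | one => exact ⟨[], rfl, by simp⟩
  | mul a b _ _ ha hb =>
    obtain ⟨La, rfl, ha⟩ := ha
    obtain ⟨Lb, rfl, hb⟩ := hb
    refine ⟨La ++ Lb, FreeGroup.mul_mk.symm, fun p hp => ?_⟩
    rcases List.mem_append.mp hp with hp | hp
    exacts [ha p hp, hb p hp]
  | inv a _ ha =>
    obtain ⟨La, rfl, ha⟩ := ha
    refine ⟨FreeGroup.invRev La, FreeGroup.inv_mk.symm, fun p hp => ?_⟩
    simp only [FreeGroup.invRev, List.mem_reverse, List.mem_map] at hp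
    obtain ⟨q, hq, rfl⟩ := hp
    exact ha q hq

lemma mk_mem_of_forall {X : Type} {K : Subgroup (FreeGroup X)} {L : List (X × Bool)}
    (h : ∀ p ∈ L, FreeGroup.of p.1 ∈ K) : FreeGroup.mk L ∈ K := by
  induction L with
  | nil => exact one_mem _
  | cons p L ih =>
    rw [mk_cons]
    refine mul_mem ?_ (ih fun p hp => h p (List.mem_cons_of_mem _ hp))
    have hp := h p List.mem_cons_self
    obtain ⟨w, b⟩ := p
    cases b
    · rw [mk_singleton_false]; exact inv_mem hp
    · exact hp

/-- The partial shift `up`, with partial inverse `dn`, induces an isomorphism between the images of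
the subgroups omitting the letters `hi` and `lo`. -/
lemma exists_shift_equiv {D H : Type} [Group H] (π : FreeGroup D →* H) (hi lo : D) (up dn : D → D)
    (hup : ∀ d, d ≠ hi → up d ≠ lo ∧ dn (up d) = d) (hdn : ∀ d, d ≠ lo → dn d ≠ hi ∧ up (dn d) = d)
    (hA : ∀ y ∈ avoid hi, π y = 1 → y = 1) (hB : ∀ y ∈ avoid lo, π y = 1 → y = 1) :
    ∃ φ : (avoid hi).map π ≃* (avoid lo).map π, ∀ y, ∀ hy : y ∈ avoid hi,
      (φ ⟨π y, Subgroup.mem_map_of_mem π hy⟩ : H) = π (FreeGroup.map up y) := by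
  have mapmem : ∀ (f : D → D) (d e : D), (∀ z, z ≠ d → f z ≠ e) → ∀ y ∈ avoid d,
      FreeGroup.map f y ∈ avoid e := by
    intro f d e hf y hy
    have : avoid d ≤ (avoid e).comap (FreeGroup.map f) := by
      rw [avoid, Subgroup.closure_le]
      rintro _ ⟨w, hw, rfl⟩
      simpa using of_mem_avoid (hf w hw)
    exact this hy
  have inv : ∀ (f g : D → D) (d : D), (∀ z, z ≠ d → g (f z) = z) → ∀ y ∈ avoid d,
      FreeGroup.map g (FreeGroup.map f y) = y := by
    intro f g d hf y hy
    exact hom_eq_of_mem_avoid (f := (FreeGroup.map g).comp (FreeGroup.map f)) (g := MonoidHom.id _)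
      (fun w hw => by simp [hf w hw]) hy
  have inj : ∀ d : D, (∀ y ∈ avoid d, π y = 1 → y = 1) →
      Function.Bijective (π.subgroupMap (avoid d)) := by
    intro d hd
    refine ⟨?_, π.subgroupMap_surjective _⟩
    rw [injective_iff_map_eq_one]
    intro a ha
    exact Subtype.ext (hd a a.2 (congrArg Subtype.val ha))
  let eU : avoid hi ≃* avoid lo :=
    { toFun := fun y => ⟨FreeGroup.map up y, mapmem up hi lo (fun z hz => (hup z hz).1) y y.2⟩
      invFun := fun y => ⟨FreeGroup.map dn y, mapmem dn lo hi (fun z hz => (hdn z hz).1) y y.2⟩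
      left_inv := fun y => Subtype.ext (inv up dn hi (fun z hz => (hup z hz).2) y y.2)
      right_inv := fun y => Subtype.ext (inv dn up lo (fun z hz => (hdn z hz).2) y y.2)
      map_mul' := fun y z => Subtype.ext (map_mul _ _ _) }
  let eA := MulEquiv.ofBijective _ (inj hi hA)
  let eB := MulEquiv.ofBijective _ (inj lo hB)
  refine ⟨eA.symm.trans (eU.trans eB), fun y hy => ?_⟩
  have : eA.symm ⟨π y, Subgroup.mem_map_of_mem π hy⟩ = ⟨y, hy⟩ := by
    rw [MulEquiv.symm_apply_eq]; rfl
  simp only [MulEquiv.trans_apply, this]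
  rfl

/-- Every group embeds in a group in which a given element has a root of given nonzero order. -/
lemma exists_root {G : Type} [Group G] (g : G) {k : ℤ} (hk : k ≠ 0) :
    ∃ (P : Type) (_ : Group P) (ι : G →* P) (τ : P), Function.Injective ι ∧ τ ^ k = ι g := by
  obtain ⟨N, hN⟩ : ∃ N, k.natAbs = N + 1 := ⟨k.natAbs - 1, by have := Int.natAbs_pos.mpr hk; omega⟩
  have hlast : (-1 : Fin (N + 1)) = Fin.last N := by
    rw [← zero_sub, sub_eq_iff_eq_add, Fin.last_add_one]
  let s : Equiv.Perm (G × Fin (N + 1)) :=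
    { toFun := fun p => (if p.2 = Fin.last N then g * p.1 else p.1, p.2 + 1)
      invFun := fun p => (if p.2 = 0 then g⁻¹ * p.1 else p.1, p.2 - 1)
      left_inv := by
        rintro ⟨a, i⟩
        by_cases h : i = Fin.last N
        · subst h; simp [hlast]
        · have : i + 1 ≠ 0 := fun h' => h (by
            rw [← add_right_cancel_iff (a := 1), h', Fin.last_add_one])
          simp [h, this]
      right_inv := by
        rintro ⟨a, i⟩
        by_cases h : i = 0
        · subst h
          simp [hlast]
        · have : i - 1 ≠ Fin.last N := fun h' => h (by
            rw [sub_eq_iff_eq_add, Fin.last_add_one] at h'; exact h')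
          simp [h, this] }
  let ι : G →* Equiv.Perm (G × Fin (N + 1)) :=
    { toFun := fun a => Equiv.prodCongr (Equiv.mulLeft a) (Equiv.refl _)
      map_one' := by ext p <;> simp
      map_mul' := fun a b => by ext p <;> simp [mul_assoc] }
  have hι : Function.Injective ι := by
    intro a b h
    have := congrArg (fun e : Equiv.Perm (G × Fin (N + 1)) => (e (1, 0)).1) h
    simpa [ι] using this
  have low : ∀ j : ℕ, j ≤ N → ∀ a : G, ∀ i : Fin (N + 1), (i : ℕ) + j ≤ N →
      ((s ^ j) (a, i)).1 = a ∧ (((s ^ j) (a, i)).2 : ℕ) = i + j := by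
    intro j
    induction j with
    | zero => intro _ a i _; simp
    | succ j ih =>
      intro hj a i hij
      obtain ⟨h1, h2⟩ := ih (by omega) a i (by omega)
      rw [pow_succ', Equiv.Perm.mul_apply]
      have hne : ((s ^ j) (a, i)).2 ≠ Fin.last N := fun h => by
        rw [h, Fin.val_last] at h2; omega
      simp only [s, Equiv.coe_fn_mk] at hne h1 h2 ⊢
      rw [if_neg hne]
      refine ⟨h1, ?_⟩
      rw [Fin.val_add_one_of_lt (lt_of_le_of_ne (Fin.le_last _) hne)]
      rw [h2]; omega
  have hs : s ^ (N + 1) = ι g := by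
    ext1 ⟨a, i⟩
    have h1 := low (N - i) (by omega) a i (by omega)
    have hi := i.2
    have e1 : (s ^ (N - (i : ℕ))) (a, i) = (a, Fin.last N) :=
      Prod.ext h1.1 (Fin.ext (by rw [h1.2, Fin.val_last]; omega))
    have h2 := low i (by omega) (g * a) 0 (by simp; omega)
    have e2 : (s ^ (i : ℕ)) (g * a, 0) = (g * a, i) :=
      Prod.ext h2.1 (Fin.ext (by rw [h2.2]; simp))
    have e3 : s (a, Fin.last N) = (g * a, 0) := by simp [s]
    have : s ^ (N + 1) = s ^ ((i : ℕ) + 1 + (N - i)) := congrArg (s ^ ·) (by omega)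
    rw [this, pow_add, pow_succ, Equiv.Perm.mul_apply, Equiv.Perm.mul_apply, e1, e3, e2]
    rfl
  rcases Int.natAbs_eq k with h | h
  · refine ⟨_, inferInstance, ι, s, hι, ?_⟩
    rw [h, hN, zpow_natCast, hs]
  · refine ⟨_, inferInstance, ι, s⁻¹, hι, ?_⟩
    rw [h, hN, zpow_neg, inv_zpow, inv_inv, zpow_natCast, hs]

/-- `exists_root` for the generators deleted by the rewriting. -/
lemma exists_hom_of_drop {X G : Type} [Group G] (ψ : FreeGroup X →* G) (c : X → ℤ) (drop : X → Bool)
    (hdrop : ∀ w w', drop w → drop w' → w = w') (hc : ∀ w, drop w → c w ≠ 0) :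
    ∃ (P : Type) (_ : Group P) (ι : G →* P) (τ : P) (v : X → P), Function.Injective ι ∧
      FreeGroup.lift (fun w => if drop w then τ ^ c w else v w * τ ^ c w) = ι.comp ψ := by
  have key : ∃ (P : Type) (_ : Group P) (ι : G →* P) (τ : P), Function.Injective ι ∧
      ∀ w, drop w → τ ^ c w = ι (ψ (FreeGroup.of w)) := by
    by_cases h : ∃ w, drop w
    · obtain ⟨w, hw⟩ := h
      obtain ⟨P, _, ι, τ, hι, hτ⟩ := exists_root (ψ (FreeGroup.of w)) (hc w hw)
      refine ⟨P, _, ι, τ, hι, fun w' hw' => ?_⟩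
      rw [hdrop w' w hw' hw]; exact hτ
    · exact ⟨G, _, MonoidHom.id G, 1, Function.injective_id, fun w hw => absurd ⟨w, hw⟩ h⟩
  obtain ⟨P, _, ι, τ, hι, hτ⟩ := key
  refine ⟨P, _, ι, τ, fun w => ι (ψ (FreeGroup.of w)) * (τ ^ c w)⁻¹, hι, ?_⟩
  ext w
  simp only [FreeGroup.lift_apply_of, MonoidHom.comp_apply]
  split_ifs with h
  · exact hτ w h
  · rw [inv_mul_cancel_right]

end OneRelator

namespace OneRelator

/-- Labelled letters whose label lies in `[0, m]` if the underlying letter is `x`. -/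
abbrev Box {X : Type} (x : X) (m : ℕ) : Type := {p : X × ℤ // p.1 = x → 0 ≤ p.2 ∧ p.2 ≤ m}

open Classical in
/-- The retraction of all labelled letters onto `Box x m`. -/
noncomputable def toBox {X : Type} (x : X) (m : ℕ) (p : X × ℤ) : Box x m :=
  if h : p.1 = x → 0 ≤ p.2 ∧ p.2 ≤ m then ⟨p, h⟩ else ⟨(x, 0), fun _ => by simp⟩

lemma val_toBox {X : Type} {x : X} {m : ℕ} {p : X × ℤ} (h : p.1 = x → 0 ≤ p.2 ∧ p.2 ≤ m) :
    (toBox x m p).1 = p := by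
  rw [toBox, dif_pos h]

lemma toBox_val {X : Type} {x : X} {m : ℕ} (d : Box x m) : toBox x m d.1 = d :=
  Subtype.ext (val_toBox d.2)

/-- The partial translation of the labels by `j`. -/
noncomputable def shift {X : Type} {x : X} {m : ℕ} (j : ℤ) (d : Box x m) : Box x m :=
  toBox x m (d.1.1, d.1.2 + j)

/-- The subgroup generated by the labelled letters not lying over `x`. -/
def avoidAll {X : Type} (x : X) (m : ℕ) : Subgroup (FreeGroup (Box x m)) :=
  Subgroup.closure (Set.image FreeGroup.of {d | d.1.1 ≠ x})

lemma avoidAll_le {X : Type} {x : X} {m : ℕ} (i : ℤ) :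
    avoidAll x m ≤ avoid (toBox x m (x, i)) := by
  refine Subgroup.closure_mono (Set.image_mono fun d hd h => hd ?_)
  rw [Set.mem_singleton_iff.mp h, toBox]
  split_ifs <;> rfl

lemma val_shift {X : Type} {x : X} {m : ℕ} {j : ℤ} {d : Box x m}
    (h : d.1.1 = x → 0 ≤ d.1.2 + j ∧ d.1.2 + j ≤ m) : (shift j d).1 = (d.1.1, d.1.2 + j) :=
  val_toBox h

lemma ne_toBox_iff {X : Type} {x : X} {m : ℕ} {i : ℤ} (h0 : 0 ≤ i) (h1 : i ≤ m) (d : Box x m) :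
    d ≠ toBox x m (x, i) ↔ (d.1.1 = x → d.1.2 ≠ i) := by
  rw [Ne, ← Subtype.val_inj, val_toBox (fun _ => ⟨h0, h1⟩), Prod.ext_iff]
  tauto

lemma shift_up {X : Type} {x : X} {m : ℕ} (d : Box x m) (h : d ≠ toBox x m (x, m)) :
    shift 1 d ≠ toBox x m (x, 0) ∧ shift (-1) (shift 1 d) = d := by
  rw [ne_toBox_iff (by simp) le_rfl] at h
  have hd := d.2
  have h1 : (shift 1 d).1 = (d.1.1, d.1.2 + 1) := val_shift fun hx => by
    have := hd hx; have := h hx; omega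
  rw [ne_toBox_iff le_rfl (by simp)]
  constructor
  · intro hx
    rw [h1] at hx ⊢
    have := hd hx
    simp only; omega
  · apply Subtype.ext
    rw [val_shift, h1]
    · simp
    · rw [h1]; intro hx; have := hd hx; simp only; omega

lemma shift_down {X : Type} {x : X} {m : ℕ} (d : Box x m) (h : d ≠ toBox x m (x, 0)) :
    shift (-1) d ≠ toBox x m (x, m) ∧ shift 1 (shift (-1) d) = d := by
  rw [ne_toBox_iff le_rfl (by simp)] at h
  have hd := d.2
  have h1 : (shift (-1) d).1 = (d.1.1, d.1.2 + -1) := val_shift fun hx => by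
    have := hd hx; have := h hx; omega
  rw [ne_toBox_iff (by simp) le_rfl]
  constructor
  · intro hx
    rw [h1] at hx ⊢
    have := hd hx
    simp only; omega
  · apply Subtype.ext
    rw [val_shift, h1]
    · simp
    · rw [h1]; intro hx; have := hd hx; simp only; omega

lemma map_shift_mem_avoidAll {X : Type} {x : X} {m : ℕ} (j : ℤ) {z : FreeGroup (Box x m)}
    (hz : z ∈ avoidAll x m) : FreeGroup.map (shift j) z ∈ avoidAll x m ∧
      FreeGroup.map (shift (-j)) (FreeGroup.map (shift j) z) = z := by
  have h1 : ∀ d : Box x m, d.1.1 ≠ x → (shift j d).1 = (d.1.1, d.1.2 + j) :=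
    fun d hd => val_shift fun h => absurd h hd
  have hle : avoidAll x m ≤ (avoidAll x m).comap (FreeGroup.map (shift j)) ⊓
      ((FreeGroup.map (shift (-j))).comp (FreeGroup.map (shift j))).eqLocus (MonoidHom.id _) := by
    rw [avoidAll, Subgroup.closure_le]
    rintro _ ⟨d, hd, rfl⟩
    have hd' : (shift j d).1.1 ≠ x := by rw [h1 d hd]; exact hd
    rw [SetLike.mem_coe, Subgroup.mem_inf, Subgroup.mem_comap, FreeGroup.map.of]
    refine ⟨?_, ?_⟩
    · exact Subgroup.subset_closure ⟨_, hd', rfl⟩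
    · change ((FreeGroup.map (shift (-j))).comp (FreeGroup.map (shift j))) (FreeGroup.of d) =
        MonoidHom.id _ (FreeGroup.of d)
      rw [MonoidHom.comp_apply, MonoidHom.id_apply, FreeGroup.map.of, FreeGroup.map.of]
      congr 1
      apply Subtype.ext
      rw [val_shift (fun h => absurd h hd'), h1 d hd]
      simp
  exact hle hz

section Splitting
open HNNExtension

variable {X H : Type} [Group H] {x : X} {m : ℕ} {π : FreeGroup (Box x m) →* H}
  {φ : (avoid (toBox x m (x, m))).map π ≃* (avoid (toBox x m (x, 0))).map π}

/-- The map from the free group to the HNN extension recording Magnus rewriting. -/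
noncomputable def toHNN (c : X → ℤ) (drop : X → Bool)
    (φ : (avoid (toBox x m (x, m))).map π ≃* (avoid (toBox x m (x, 0))).map π) :
    FreeGroup X →* HNNExtension H _ _ φ :=
  FreeGroup.lift fun w =>
    if drop w then t ^ c w else of (π (FreeGroup.of (toBox x m (w, 0)))) * t ^ c w

lemma t_mul_of_shift
    (hφ : ∀ y, ∀ hy : y ∈ avoid (toBox x m (x, m)),
      (φ ⟨π y, Subgroup.mem_map_of_mem π hy⟩ : H) = π (FreeGroup.map (shift 1) y))
    {y : FreeGroup (Box x m)} (hy : y ∈ avoid (toBox x m (x, m))) :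
    (t : HNNExtension H _ _ φ) * of (π y) = of (π (FreeGroup.map (shift 1) y)) * t := by
  rw [← hφ y hy]
  exact t_mul_of (φ := φ) ⟨π y, Subgroup.mem_map_of_mem π hy⟩

lemma conj_t_of
    (hφ : ∀ y, ∀ hy : y ∈ avoid (toBox x m (x, m)),
      (φ ⟨π y, Subgroup.mem_map_of_mem π hy⟩ : H) = π (FreeGroup.map (shift 1) y))
    (d : Box x m) :
    (t : HNNExtension H _ _ φ) ^ d.1.2 * of (π (FreeGroup.of (toBox x m (d.1.1, 0)))) * t ^ (-d.1.2) =
      of (π (FreeGroup.of d)) := by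
  have step : ∀ (w : X) (i : ℤ), (w = x → 0 ≤ i ∧ i + 1 ≤ m) →
      (t : HNNExtension H _ _ φ) * of (π (FreeGroup.of (toBox x m (w, i)))) * t⁻¹ =
        of (π (FreeGroup.of (toBox x m (w, i + 1)))) := by
    intro w i h
    have hv : (toBox x m (w, i)).1 = (w, i) := val_toBox fun hw => by
      have := h hw; simp only; omega
    have hne : toBox x m (w, i) ≠ toBox x m (x, m) := by
      rw [ne_toBox_iff (by simp) le_rfl, hv]
      intro hw; have := h hw; simp only; omega
    rw [t_mul_of_shift hφ (of_mem_avoid hne), mul_inv_cancel_right, FreeGroup.map.of, shift, hv]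
  have pos : ∀ (w : X) (j : ℕ), (w = x → j ≤ m) →
      (t : HNNExtension H _ _ φ) ^ (j : ℤ) * of (π (FreeGroup.of (toBox x m (w, 0)))) *
        t ^ (-(j : ℤ)) = of (π (FreeGroup.of (toBox x m (w, j)))) := by
    intro w j
    induction j with
    | zero => intro _; simp
    | succ j ih =>
      intro h
      push_cast
      rw [← step w j (fun hw => by have := h hw; omega), ← ih (fun hw => by have := h hw; omega)]
      group
  have neg : ∀ (w : X) (j : ℕ), w ≠ x →
      (t : HNNExtension H _ _ φ) ^ (-(j : ℤ)) * of (π (FreeGroup.of (toBox x m (w, 0)))) *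
        t ^ (j : ℤ) = of (π (FreeGroup.of (toBox x m (w, -j)))) := by
    intro w j hw
    induction j with
    | zero => simp
    | succ j ih =>
      have h1 := step w (-(j + 1 : ℕ)) (fun h => absurd h hw)
      rw [show (-((j + 1 : ℕ) : ℤ) + 1) = -(j : ℤ) by push_cast; ring, ← ih] at h1
      apply mul_left_cancel (a := t)
      apply mul_right_cancel (b := t⁻¹)
      rw [h1]
      push_cast
      group
  have hd := d.2
  conv_rhs => rw [← toBox_val d]
  rcases Int.eq_nat_or_neg d.1.2 with ⟨j, hj | hj⟩
  · have := pos d.1.1 j (fun h => by have := hd h; omega)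
    rw [← hj] at this
    exact this
  · by_cases hx : d.1.1 = x
    · have h0 : d.1.2 = 0 := by have := hd hx; omega
      have h1 : d.1 = (d.1.1, 0) := Prod.ext rfl h0
      rw [h0, ← h1]; simp
    · have := neg d.1.1 j hx
      rw [show (j : ℤ) = -d.1.2 by omega, neg_neg] at this
      exact this

lemma toHNN_mk
    (hφ : ∀ y, ∀ hy : y ∈ avoid (toBox x m (x, m)),
      (φ ⟨π y, Subgroup.mem_map_of_mem π hy⟩ : H) = π (FreeGroup.map (shift 1) y))
    {c : X → ℤ} {drop : X → Bool} {i : ℤ} {L : List (X × Bool)} {M : List (Box x m × Bool)}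
    (hM : M.map (fun p => (p.1.1, p.2)) = rew c drop i L) :
    t ^ i * toHNN c drop φ (FreeGroup.mk L) = of (π (FreeGroup.mk M)) * t ^ (i + ht c L) := by
  rw [toHNN, rew_lift, ← hM, ← FreeGroup.map.mk, ← MonoidHom.comp_apply (FreeGroup.lift _)]
  congr 1
  rw [← MonoidHom.comp_apply]
  congr 1
  ext d
  simp only [MonoidHom.comp_apply, FreeGroup.map.of, FreeGroup.lift_apply_of]
  exact conj_t_of hφ d

/-- A rewriting of words inside another group factors through the HNN extension. -/
lemma exists_hom_of_hnn
    (hφ : ∀ y, ∀ hy : y ∈ avoid (toBox x m (x, m)),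
      (φ ⟨π y, Subgroup.mem_map_of_mem π hy⟩ : H) = π (FreeGroup.map (shift 1) y))
    (c : X → ℤ) (drop : X → Bool) {P : Type} [Group P] (τ : P) (v : X → P) (f : H →* P)
    (hf : ∀ d, f (π (FreeGroup.of d)) = τ ^ d.1.2 * v d.1.1 * τ ^ (-d.1.2)) :
    ∃ F : HNNExtension H _ _ φ →* P, F.comp (toHNN c drop φ) =
      FreeGroup.lift fun w => if drop w then τ ^ c w else v w * τ ^ c w := by
  refine ⟨HNNExtension.lift f τ ?_, ?_⟩
  · rintro ⟨_, y, hy, rfl⟩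
    rw [hφ y hy]
    have : (MulAut.conj τ).toMonoidHom.comp (f.comp π) y =
        (f.comp π).comp (FreeGroup.map (shift 1)) y := by
      refine hom_eq_of_mem_avoid (fun d hd => ?_) hy
      have hd2 := d.2
      rw [ne_toBox_iff (by simp) le_rfl] at hd
      have hs : (shift 1 d).1 = (d.1.1, d.1.2 + 1) := val_shift fun hx => by
        have := hd2 hx; have := hd hx; omega
      simp only [MonoidHom.comp_apply, FreeGroup.map.of, hf, hs, MulEquiv.toMonoidHom_eq_coe,
        MonoidHom.coe_coe, MulAut.conj_apply]
      group
    simp only [MonoidHom.comp_apply, MulEquiv.toMonoidHom_eq_coe, MonoidHom.coe_coe,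
      MulAut.conj_apply] at this
    rw [← this, inv_mul_cancel_right]
  · ext w
    simp only [MonoidHom.comp_apply, toHNN, FreeGroup.lift_apply_of]
    split_ifs with h
    · simp
    · simp only [map_mul, map_zpow, lift_t, lift_of, hf]
      congr 1
      have : (toBox x m (w, 0)).1 = (w, 0) := val_toBox fun _ => by simp
      simp [this]

end Splitting
end OneRelator

namespace OneRelator
open HNNExtension

variable {X : Type} {x : X} {m : ℕ} {c : X → ℤ} {drop : X → Bool}

/-- Rewriting of an element of the subgroup omitting `x`. -/
lemma exists_rew_of_mem_avoid (hdrop : ∀ w w', drop w → drop w' → w = w')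
    (hc : ∀ w, drop w → c w ≠ 0) (m : ℕ) {y : FreeGroup X} (hy : y ∈ avoid x) :
    ∃ (K : List (X × Bool)) (M : List (Box x m × Bool)), FreeGroup.mk K = y ∧
      M.map (fun p => (p.1.1, p.2)) = rew c drop 0 K ∧ FreeGroup.mk M ∈ avoidAll x m ∧
      (FreeGroup.mk M = 1 → ht c K = 0 → y = 1) := by
  obtain ⟨K, rfl, hK⟩ := exists_word_of_mem_avoid hy
  have hM : ((rew c drop 0 K).map fun p => (toBox x m p.1, p.2)).map (fun p => (p.1.1, p.2)) =
      rew c drop 0 K := by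
    rw [List.map_map]
    conv_rhs => rw [← List.map_id (rew c drop 0 K)]
    refine List.map_congr_left fun p hp => ?_
    have := hK _ (mem_rew hp).1
    simp only [Function.comp_apply, id]
    rw [val_toBox fun h => absurd h this]
  refine ⟨K, (rew c drop 0 K).map fun p => (toBox x m p.1, p.2), rfl, hM, ?_, fun h1 h0 => ?_⟩
  · refine mk_mem_of_forall fun p hp => Subgroup.subset_closure ⟨_, ?_, rfl⟩
    obtain ⟨q, hq, rfl⟩ := List.mem_map.mp hp
    have := hK _ (mem_rew hq).1
    simp only [Set.mem_ofPred_eq]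
    rw [val_toBox fun h => absurd h this]
    exact this
  · obtain ⟨P, _, ι, τ, v, hι, h⟩ := exists_hom_of_drop (MonoidHom.id (FreeGroup X)) c drop hdrop hc
    apply hι
    have := rew_lift c drop τ v 0 K
    rw [h, ← hM, ← FreeGroup.map.mk, h1, h0] at this
    simpa using this

section

variable {H : Type} [Group H] {π : FreeGroup (Box x m) →* H}
  {φ : (avoid (toBox x m (x, m))).map π ≃* (avoid (toBox x m (x, 0))).map π}
  {L : List (X × Bool)} {L' : List (Box x m × Bool)} {i : ℤ}

lemma toHNN_eq_one
    (hφ : ∀ y, ∀ hy : y ∈ avoid (toBox x m (x, m)),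
      (φ ⟨π y, Subgroup.mem_map_of_mem π hy⟩ : H) = π (FreeGroup.map (shift 1) y))
    (hL' : L'.map (fun p => (p.1.1, p.2)) = rew c drop i L) (hht : ht c L = 0) {k : ℕ}
    (hk : π (FreeGroup.mk L' ^ k) = 1) {g : FreeGroup X} (hg : g ∈ rel L k) :
    toHNN c drop φ g = 1 := by
  refine map_eq_one_of_mem_rel _ ?_ hg
  have h := toHNN_mk hφ hL'
  rw [hht, add_zero, ← eq_inv_mul_iff_mul_eq] at h
  have h2 : toHNN c drop φ (FreeGroup.mk L) =
      (t ^ i)⁻¹ * of (π (FreeGroup.mk L')) * (t ^ i)⁻¹⁻¹ := by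
    rw [h, inv_inv, mul_assoc]
  rw [h2, conj_pow, ← map_pow, ← map_pow, hk, map_one, mul_one, mul_inv_cancel]

lemma height_toHNN
    (hφ : ∀ y, ∀ hy : y ∈ avoid (toBox x m (x, m)),
      (φ ⟨π y, Subgroup.mem_map_of_mem π hy⟩ : H) = π (FreeGroup.map (shift 1) y))
    (hL' : L'.map (fun p => (p.1.1, p.2)) = rew c drop i L) (hht : ht c L = 0)
    {g : FreeGroup X} (hg : g ∈ rel L 1) : height φ (toHNN c drop φ g) = 1 := by
  rw [← MonoidHom.comp_apply]
  refine map_eq_one_of_mem_rel _ ?_ hg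
  have h := congrArg (height φ) (toHNN_mk hφ hL')
  rw [hht, add_zero, map_mul, map_mul, height_of, one_mul] at h
  rw [pow_one, MonoidHom.comp_apply]
  exact mul_eq_left.mp h

end

variable {n : ℕ} {L : List (X × Bool)} {L' : List (Box x m × Bool)} {i : ℤ}

lemma mem_rel_of_toHNN
    {φ : (avoid (toBox x m (x, m))).map (QuotientGroup.mk' (rel L' n)) ≃*
      (avoid (toBox x m (x, 0))).map (QuotientGroup.mk' (rel L' n))}
    (hdrop : ∀ w w', drop w → drop w' → w = w') (hc : ∀ w, drop w → c w ≠ 0)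
    (hφ : ∀ y, ∀ hy : y ∈ avoid (toBox x m (x, m)),
      (φ ⟨_, Subgroup.mem_map_of_mem _ hy⟩ : FreeGroup (Box x m) ⧸ rel L' n) =
        QuotientGroup.mk' _ (FreeGroup.map (shift 1) y))
    (hL' : L'.map (fun p => (p.1.1, p.2)) = rew c drop i L) (hht : ht c L = 0) {g : FreeGroup X}
    (hg : toHNN c drop φ g = 1) : g ∈ rel L n := by
  obtain ⟨P, _, ι, τ, v, hι, h⟩ :=
    exists_hom_of_drop (QuotientGroup.mk' (rel L n)) c drop hdrop hc
  let β : FreeGroup (Box x m) →* P :=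
    FreeGroup.lift fun d => τ ^ d.1.2 * v d.1.1 * τ ^ (-d.1.2)
  have hβ : β = (FreeGroup.lift fun p : X × ℤ => τ ^ p.2 * v p.1 * τ ^ (-p.2)).comp
      (FreeGroup.map Subtype.val) := by
    ext d; simp [β]
  have hβL : β (FreeGroup.mk L') ^ n = 1 := by
    have h1 := rew_lift c drop τ v i L
    rw [h, ← hL', ← FreeGroup.map.mk, ← MonoidHom.comp_apply (FreeGroup.lift _), ← hβ, hht,
      add_zero, ← mul_inv_eq_iff_eq_mul] at h1
    rw [← h1, conj_pow, ← map_pow, MonoidHom.comp_apply]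
    have : QuotientGroup.mk' (rel L n) (FreeGroup.mk L ^ n) = 1 := by
      rw [QuotientGroup.mk'_apply, QuotientGroup.eq_one_iff]
      exact Subgroup.subset_normalClosure rfl
    rw [this, map_one, mul_one, mul_inv_cancel]
  obtain ⟨F, hF⟩ := exists_hom_of_hnn hφ c drop τ v
    (QuotientGroup.lift (rel L' n) β fun g hg => map_eq_one_of_mem_rel β hβL hg) (fun d => by
      change β (FreeGroup.of d) = _
      simp [β])
  rw [h] at hF
  have h2 := DFunLike.congr_fun hF g
  rw [MonoidHom.comp_apply, hg, map_one, MonoidHom.comp_apply] at h2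
  have h3 : QuotientGroup.mk' (rel L n) g = 1 := hι (by rw [← h2, map_one])
  rwa [QuotientGroup.mk'_apply, QuotientGroup.eq_one_iff] at h3

lemma exists_shift_equiv_rel (k : ℕ) (hhi : Good n L' (toBox x m (x, m)))
    (hlo : Good n L' (toBox x m (x, 0))) :
    ∃ φ : (avoid (toBox x m (x, m))).map (QuotientGroup.mk' (rel L' k)) ≃*
      (avoid (toBox x m (x, 0))).map (QuotientGroup.mk' (rel L' k)),
      ∀ y, ∀ hy : y ∈ avoid (toBox x m (x, m)),
        (φ ⟨_, Subgroup.mem_map_of_mem _ hy⟩ : FreeGroup (Box x m) ⧸ rel L' k) =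
          QuotientGroup.mk' _ (FreeGroup.map (shift 1) y) := by
  refine exists_shift_equiv _ _ _ (shift 1) (shift (-1)) shift_up shift_down ?_ ?_
  · intro y hy h
    rw [QuotientGroup.mk'_apply, QuotientGroup.eq_one_iff] at h
    exact hhi.free y hy (rel_le_rel_one _ _ h)
  · intro y hy h
    rw [QuotientGroup.mk'_apply, QuotientGroup.eq_one_iff] at h
    exact hlo.free y hy (rel_le_rel_one _ _ h)

end OneRelator

namespace OneRelator
open HNNExtension

variable {X : Type} {x : X} {m : ℕ} {c : X → ℤ} {drop : X → Bool}
variable {n : ℕ} {L : List (X × Bool)} {L' : List (Box x m × Bool)} {i : ℤ}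

/-- An element of the kernel of the full relator which lies in the base group comes from
the corresponding kernel there. -/
lemma mem_rel_one_of_toHNN
    {φ : (avoid (toBox x m (x, m))).map (QuotientGroup.mk' (rel L' n)) ≃*
      (avoid (toBox x m (x, 0))).map (QuotientGroup.mk' (rel L' n))}
    {φ₁ : (avoid (toBox x m (x, m))).map (QuotientGroup.mk' (rel L' 1)) ≃*
      (avoid (toBox x m (x, 0))).map (QuotientGroup.mk' (rel L' 1))}
    (hφ : ∀ y, ∀ hy : y ∈ avoid (toBox x m (x, m)),
      (φ ⟨_, Subgroup.mem_map_of_mem _ hy⟩ : FreeGroup (Box x m) ⧸ rel L' n) =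
        QuotientGroup.mk' _ (FreeGroup.map (shift 1) y))
    (hφ₁ : ∀ y, ∀ hy : y ∈ avoid (toBox x m (x, m)),
      (φ₁ ⟨_, Subgroup.mem_map_of_mem _ hy⟩ : FreeGroup (Box x m) ⧸ rel L' 1) =
        QuotientGroup.mk' _ (FreeGroup.map (shift 1) y))
    {g : FreeGroup X} {u : FreeGroup (Box x m)} (hg : toHNN c drop φ₁ g = 1)
    (hu : toHNN c drop φ g = of (QuotientGroup.mk' _ u)) : u ∈ rel L' 1 := by
  have hle : ∀ a ∈ rel L' n, (of.comp (QuotientGroup.mk' (rel L' 1)) :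
      _ →* HNNExtension (FreeGroup (Box x m) ⧸ rel L' 1) _ _ φ₁) a = 1 := by
    intro a ha
    rw [MonoidHom.comp_apply, QuotientGroup.mk'_apply,
      (QuotientGroup.eq_one_iff a).mpr (rel_le_rel_one _ _ ha), map_one]
  let f : FreeGroup (Box x m) ⧸ rel L' n →*
      HNNExtension (FreeGroup (Box x m) ⧸ rel L' 1) _ _ φ₁ := QuotientGroup.lift _ _ hle
  have hf : ∀ a, f (QuotientGroup.mk' _ a) = of (QuotientGroup.mk' (rel L' 1) a) := fun a => rfl
  let F : HNNExtension (FreeGroup (Box x m) ⧸ rel L' n) _ _ φ →*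
      HNNExtension (FreeGroup (Box x m) ⧸ rel L' 1) _ _ φ₁ := HNNExtension.lift f t (by
    rintro ⟨_, y, hy, rfl⟩
    rw [hφ y hy, hf, hf]
    exact t_mul_of_shift hφ₁ hy)
  have hF : F.comp (toHNN c drop φ) = toHNN c drop φ₁ := by
    ext w
    simp only [MonoidHom.comp_apply, toHNN, FreeGroup.lift_apply_of, F]
    split_ifs
    · simp
    · rw [map_mul, map_zpow, lift_t, lift_of, hf]
  have h := DFunLike.congr_fun hF g
  rw [MonoidHom.comp_apply, hu, hg] at h
  simp only [F] at h
  rw [lift_of, hf] at h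
  have h1 := of_injective φ₁ (h.trans (map_one of).symm)
  rwa [QuotientGroup.mk'_apply, QuotientGroup.eq_one_iff] at h1

lemma Good.mem_map_of_conj {D : Type} {L : List (D × Bool)} {d : D} (hn : 1 < n)
    (hG : Good n L d) {z : FreeGroup D} (hz : z ∈ avoid d) (hz1 : z ≠ 1) {h : FreeGroup D ⧸ rel L n}
    (hh : h⁻¹ * QuotientGroup.mk' (rel L n) z * h ∈ (avoid d).map (QuotientGroup.mk' (rel L n))) :
    h ∈ (avoid d).map (QuotientGroup.mk' (rel L n)) := by
  obtain ⟨a, rfl⟩ := QuotientGroup.mk'_surjective _ h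
  obtain ⟨y', hy', h⟩ := hh
  obtain ⟨f, hf, hfa⟩ := hG.malnormal hn (g := a⁻¹) hz hz1 hy' (by
    rw [← QuotientGroup.eq_one_iff, ← QuotientGroup.mk'_apply, map_mul, map_inv _ y', h]
    simp)
  refine ⟨f⁻¹, inv_mem hf, ?_⟩
  rwa [← QuotientGroup.eq_one_iff, ← QuotientGroup.mk'_apply, map_mul, map_inv _ a,
    mul_inv_eq_one] at hfa

/-- The inductive step: properties of the rewritten relator in the base group of a
Magnus splitting carry over to the relator itself. -/
lemma Good.step (hn : 1 < n) (hdrop : ∀ w w', drop w → drop w' → w = w')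
    (hc : ∀ w, drop w → c w ≠ 0) (hht : ht c L = 0)
    (hL' : L'.map (fun p => (p.1.1, p.2)) = rew c drop i L)
    (hhi : Good n L' (toBox x m (x, m))) (hlo : Good n L' (toBox x m (x, 0))) : Good n L x := by
  obtain ⟨φ, hφ⟩ := exists_shift_equiv_rel n hhi hlo
  obtain ⟨φ₁, hφ₁⟩ := exists_shift_equiv_rel 1 hhi hlo
  have hk : ∀ k, QuotientGroup.mk' (rel L' k) (FreeGroup.mk L' ^ k) = 1 := fun k => by
    rw [QuotientGroup.mk'_apply, QuotientGroup.eq_one_iff]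
    exact Subgroup.subset_normalClosure rfl
  have kill₁ : ∀ g ∈ rel L 1, toHNN c drop φ₁ g = 1 :=
    fun g hg => toHNN_eq_one hφ₁ hL' hht (hk 1) hg
  have kill : ∀ g ∈ rel L n, toHNN c drop φ g = 1 :=
    fun g hg => toHNN_eq_one hφ hL' hht (hk n) hg
  constructor
  · intro y hy hy1
    obtain ⟨K, M, rfl, hM, hMa, hinj⟩ := exists_rew_of_mem_avoid (x := x) hdrop hc m hy
    have h := toHNN_mk hφ₁ hM
    rw [kill₁ _ hy1, zpow_zero, one_mul, zero_add] at h
    have he := congrArg (height φ₁) h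
    rw [map_one, map_mul, height_of, one_mul, map_zpow, height_t, ← ofAdd_zsmul] at he
    have he0 : ht c K = 0 := by simpa using he.symm
    rw [he0, zpow_zero, mul_one, ← map_one of] at h
    have h1 := of_injective φ₁ h.symm
    rw [QuotientGroup.mk'_apply, QuotientGroup.eq_one_iff] at h1
    exact hinj (hhi.free _ (avoidAll_le _ hMa) h1) he0
  · intro g hg y hy hy1 hcom
    obtain ⟨K, M, rfl, hM, hMa, hinj⟩ := exists_rew_of_mem_avoid (x := x) hdrop hc m hy
    have h := toHNN_mk hφ hM
    rw [zpow_zero, one_mul, zero_add] at h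
    have hht1 := height_toHNN hφ hL' hht hg
    have hcomm : toHNN c drop φ g * toHNN c drop φ (FreeGroup.mk K) =
        toHNN c drop φ (FreeGroup.mk K) * toHNN c drop φ g := by
      have := kill _ hcom
      rw [map_mul, map_mul, map_mul, map_inv, map_inv, mul_inv_eq_one, mul_inv_eq_iff_eq_mul] at this
      exact this
    let S := HNNExtension.toSubgroup ((avoid (toBox x m (x, m))).map (QuotientGroup.mk' (rel L' n)))
      ((avoid (toBox x m (x, 0))).map (QuotientGroup.mk' (rel L' n)))
    by_cases he : ht c K = 0
    · have hz1 : FreeGroup.mk M ≠ 1 := fun hz1 => hy1 (hinj hz1 he)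
      rw [he, zpow_zero, mul_one] at h
      rw [h] at hcomm
      let V : Set (FreeGroup (Box x m) ⧸ rel L' n) :=
        {v | ∃ z ∈ avoidAll x m, z ≠ 1 ∧ QuotientGroup.mk' (rel L' n) z = v}
      have hshift : ∀ v ∈ V, ∀ s : ℤˣ, ∃ v' ∈ V,
          (of v : HNNExtension _ _ _ φ) * t ^ (s : ℤ) = t ^ (s : ℤ) * of v' := by
        rintro _ ⟨z, hz, hz1, rfl⟩ s
        rcases Int.units_eq_one_or s with rfl | rfl
        · obtain ⟨h1, h2⟩ := map_shift_mem_avoidAll (-1) hz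
          rw [neg_neg] at h2
          refine ⟨_, ⟨_, h1, fun h3 => hz1 (by rw [← h2, h3, map_one]), rfl⟩, ?_⟩
          have := t_mul_of_shift hφ (avoidAll_le _ h1)
          rw [h2] at this
          simpa using this.symm
        · obtain ⟨h1, h2⟩ := map_shift_mem_avoidAll 1 hz
          refine ⟨_, ⟨_, h1, fun h3 => hz1 (by rw [← h2, h3, map_one]), rfl⟩, ?_⟩
          have := t_mul_of_shift hφ (avoidAll_le _ hz)
          rw [Units.val_neg, Units.val_one, zpow_neg, zpow_one, mul_inv_eq_iff_eq_mul, mul_assoc,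
            ← this, inv_mul_cancel_left]
      have hmal : ∀ v ∈ V, ∀ (s : ℤˣ) h, h⁻¹ * v * h ∈ S s → h ∈ S s := by
        rintro _ ⟨z, hz, hz1, rfl⟩ s h1 hh
        rcases Int.units_eq_one_or s with rfl | rfl
        · exact hhi.mem_map_of_conj hn (avoidAll_le _ hz) hz1 hh
        · exact hlo.mem_map_of_conj hn (avoidAll_le _ hz) hz1 hh
      obtain ⟨b, hu⟩ := eq_of_of_conj hshift hmal hht1 ⟨_, hMa, hz1, rfl⟩ hcomm.symm
      obtain ⟨u, rfl⟩ := QuotientGroup.mk'_surjective _ b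
      have hu1 := mem_rel_one_of_toHNN hφ hφ₁ (kill₁ g hg) hu
      refine mem_rel_of_toHNN hdrop hc hφ hL' hht ?_
      rw [hu, ← map_mul of, ← map_mul of] at hcomm
      have hcomm' := of_injective φ hcomm
      have := hhi.cent u hu1 _ (avoidAll_le _ hMa) hz1 (by
        rw [← QuotientGroup.eq_one_iff, ← QuotientGroup.mk'_apply, map_mul, map_mul, map_mul,
          hcomm', map_inv, map_inv]
        group)
      rw [hu, QuotientGroup.mk'_apply, (QuotientGroup.eq_one_iff u).mpr this, map_one]
    · obtain ⟨s, k, hk0, hsk⟩ : ∃ (s : ℤˣ) (k : ℕ), 0 < k ∧ ht c K = (s : ℤ) * k := by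
        rcases Int.eq_nat_or_neg (ht c K) with ⟨k, hk | hk⟩
        · exact ⟨1, k, by omega, by simpa using hk⟩
        · exact ⟨-1, k, by omega, by simpa using hk⟩
      rw [hsk] at h
      set v := QuotientGroup.mk' (rel L' n) (FreeGroup.mk M)
      have hz : Rep φ (toHNN c drop φ (FreeGroup.mk K)) (List.replicate k s) := by
        rw [h]
        exact (rep_of v).mul (rep_t_zpow s k) (by simp)
      have hz' : Rep φ (toHNN c drop φ (FreeGroup.mk K))⁻¹ (List.replicate k (-s)) := by
        have := (rep_t_zpow (φ := φ) (-s) k).mul_of v⁻¹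
        rwa [Units.val_neg, neg_mul, zpow_neg, map_inv, ← mul_inv_rev, ← h] at this
      obtain ⟨b, hb⟩ := eq_of_of_commute hk0 hz hz' hcomm.symm hht1
      have hmem : b ∈ S s := by
        refine mem_of_conj_t (φ := φ) hk0 (k := v⁻¹ * b * v) ?_
        rw [hb, h] at hcomm
        rw [map_mul, map_mul, map_inv]
        apply mul_left_cancel (a := of v)
        rw [← mul_assoc, ← hcomm]
        group
      have conc : ∀ d, Good n L' d → b ∈ (avoid d).map (QuotientGroup.mk' (rel L' n)) →
          g ∈ rel L n := by
        rintro d hd ⟨a, ha, rfl⟩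
        have := hd.free a ha (mem_rel_one_of_toHNN hφ hφ₁ (kill₁ g hg) hb)
        refine mem_rel_of_toHNN hdrop hc hφ hL' hht ?_
        rw [hb, this, map_one, map_one]
      rcases Int.units_eq_one_or s with rfl | rfl
      · exact conc _ hhi hmem
      · exact conc _ hlo hmem

end OneRelator

namespace OneRelator

variable {X : Type} {c : X → ℤ} {drop : X → Bool}

lemma rew_append (i : ℤ) (L K : List (X × Bool)) :
    rew c drop i (L ++ K) = rew c drop i L ++ rew c drop (i + ht c L) K := by
  induction L generalizing i with
  | nil => simp [rew]
  | cons p L ih =>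
    rw [List.cons_append, rew, rew, ih, ht_cons, add_assoc]
    split_ifs <;> rfl

lemma rew_add (i j : ℤ) (L : List (X × Bool)) :
    rew c drop (i + j) L = (rew c drop i L).map fun p => ((p.1.1, p.1.2 + j), p.2) := by
  induction L generalizing i with
  | nil => rfl
  | cons p L ih =>
    have hp : pos c (i + j) p = pos c i p + j := by
      unfold pos; split_ifs <;> ring
    rw [rew, rew, add_right_comm, ih, hp]
    split_ifs <;> rfl

lemma length_rew_le (i : ℤ) (L : List (X × Bool)) : (rew c drop i L).length ≤ L.length := by
  induction L generalizing i with
  | nil => exact le_rfl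
  | cons p L ih =>
    have := ih (i + wt c p)
    rw [rew]
    split_ifs <;> simp only [List.length_cons] <;> omega

lemma length_rew_lt (i : ℤ) {L : List (X × Bool)} {p : X × Bool} (hp : p ∈ L) (hd : drop p.1) :
    (rew c drop i L).length < L.length := by
  induction L generalizing i with
  | nil => simp at hp
  | cons q L ih =>
    have := length_rew_le (c := c) (drop := drop) (i + wt c q) L
    rw [rew]
    rcases List.mem_cons.mp hp with rfl | hp
    · rw [if_pos hd, List.length_cons]; omega
    · have := ih (i + wt c q) hp
      split_ifs <;> simp only [List.length_cons] <;> omega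

lemma exists_mem_rew (i : ℤ) {L : List (X × Bool)} {p : X × Bool} (hp : p ∈ L)
    (hd : drop p.1 = false) : ∃ j, ((p.1, j), p.2) ∈ rew c drop i L := by
  induction L generalizing i with
  | nil => simp at hp
  | cons q L ih =>
    rw [rew]
    rcases List.mem_cons.mp hp with rfl | hp
    · exact ⟨_, by rw [hd, if_neg Bool.false_ne_true]; exact List.mem_cons_self⟩
    · obtain ⟨j, hj⟩ := ih (i + wt c q) hp
      refine ⟨j, ?_⟩
      split_ifs
      exacts [hj, List.mem_cons_of_mem _ hj]

lemma head_rew (hdrop : ∀ w w', drop w → drop w' → w = w') {L : List (X × Bool)}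
    (hL : FreeGroup.IsReduced L) (i : ℤ) {a : (X × ℤ) × Bool} (ha : a ∈ (rew c drop i L).head?) :
    ((a.1.1, a.2) ∈ L.head? ∧ a.1.2 = pos c i (a.1.1, a.2)) ∨
      ∃ p ∈ L.head?, drop p.1 ∧ ∃ k : ℕ, 0 < k ∧
        a.1.2 = pos c (i + k * wt c p) (a.1.1, a.2) := by
  induction L generalizing i with
  | nil => simp [rew] at ha
  | cons p L ih =>
    obtain ⟨hL1, hL2⟩ := List.isChain_cons.mp hL
    rw [rew] at ha
    split_ifs at ha with hd
    · right
      refine ⟨p, rfl, hd, ?_⟩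
      rcases ih hL2 _ ha with ⟨_, h⟩ | ⟨q, hq, hdq, k, hk, h⟩
      · exact ⟨1, one_pos, by rw [h, Nat.cast_one, one_mul]⟩
      · have h1 : p.1 = q.1 := hdrop _ _ hd hdq
        have : p = q := Prod.ext h1 (hL1 q hq h1)
        subst this
        refine ⟨k + 1, k.succ_pos, ?_⟩
        rw [h]
        congr 1
        push_cast
        ring
    · left
      obtain rfl : _ = a := by simpa using ha
      exact ⟨rfl, rfl⟩

/-- Magnus rewriting preserves reducedness. -/
lemma isReduced_rew (hdrop : ∀ w w', drop w → drop w' → w = w') (hc : ∀ w, drop w → c w ≠ 0)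
    {L : List (X × Bool)} (hL : FreeGroup.IsReduced L) (i : ℤ) :
    FreeGroup.IsReduced (rew c drop i L) := by
  induction L generalizing i with
  | nil => exact List.isChain_nil
  | cons p L ih =>
    obtain ⟨hL1, hL2⟩ := List.isChain_cons.mp hL
    rw [rew]
    split_ifs with hd
    · exact ih hL2 _
    · refine List.isChain_cons.mpr ⟨fun a ha hpa => ?_, ih hL2 _⟩
      rcases head_rew hdrop hL2 _ ha with ⟨h1, h2⟩ | ⟨q, hq, hdq, k, hk, h⟩
      · exact hL1 (a.1.1, a.2) h1 (show p.1 = a.1.1 from congrArg Prod.fst hpa)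
      · by_contra hne
        have h1 : p.1 = a.1.1 := congrArg Prod.fst hpa
        have h2 : pos c i p = a.1.2 := congrArg Prod.snd hpa
        have hk0 : (k : ℤ) * wt c q ≠ 0 := by
          refine mul_ne_zero (by exact_mod_cast hk.ne') ?_
          have := hc _ hdq
          unfold wt
          split_ifs
          exacts [this, neg_ne_zero.mpr this]
        rw [h] at h2
        obtain ⟨w, b⟩ := p
        obtain ⟨⟨w', j⟩, b'⟩ := a
        obtain rfl : w = w' := h1
        apply hk0
        cases b <;> cases b' <;> simp [pos, wt] at h2 hne ⊢ <;> omega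

lemma isReduced_append_self {L : List (X × Bool)} :
    FreeGroup.IsReduced (L ++ L) ↔ FreeGroup.IsCyclicallyReduced L := by
  simp only [FreeGroup.isCyclicallyReduced_iff, FreeGroup.IsReduced, List.isChain_append]
  tauto

lemma isCyclicallyReduced_rew (hdrop : ∀ w w', drop w → drop w' → w = w')
    (hc : ∀ w, drop w → c w ≠ 0) {L : List (X × Bool)} (hL : FreeGroup.IsCyclicallyReduced L)
    (hht : ht c L = 0) (i : ℤ) : FreeGroup.IsCyclicallyReduced (rew c drop i L) := by
  have h := isReduced_rew hdrop hc (isReduced_append_self.mpr hL) i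
  rwa [rew_append, hht, add_zero, isReduced_append_self] at h

lemma isReduced_of_map {Y : Type} {f : Y → X} {L : List (Y × Bool)}
    (h : FreeGroup.IsReduced (L.map fun p => (f p.1, p.2))) : FreeGroup.IsReduced L := by
  rw [FreeGroup.IsReduced, List.isChain_map] at h
  exact h.imp fun a b hab h1 => hab (congrArg f h1)

lemma isCyclicallyReduced_of_map {Y : Type} {f : Y → X}
    {L : List (Y × Bool)} (h : FreeGroup.IsCyclicallyReduced (L.map fun p => (f p.1, p.2))) :
    FreeGroup.IsCyclicallyReduced L := by
  rw [← isReduced_append_self] at h ⊢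
  rw [← List.map_append] at h
  exact isReduced_of_map h

/-- The starting height can be chosen so that the labels of `x` have minimum `0`. -/
lemma exists_box {L : List (X × Bool)} {x : X} (hx : x ∈ L.map Prod.fst) (hd : drop x = false) :
    ∃ (m : ℕ) (i : ℤ) (L' : List (Box x m × Bool)),
      L'.map (fun p => (p.1.1, p.2)) = rew c drop i L ∧
      toBox x m (x, m) ∈ L'.map Prod.fst ∧ toBox x m (x, 0) ∈ L'.map Prod.fst := by
  classical
  obtain ⟨p, hp, rfl⟩ := List.mem_map.mp hx
  obtain ⟨j, hj⟩ := exists_mem_rew (c := c) 0 hp hd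
  let S : Finset ℤ := (((rew c drop 0 L).map Prod.fst).toFinset.filter fun q => q.1 = p.1).image
    Prod.snd
  have hS : ∀ k, k ∈ S ↔ (p.1, k) ∈ (rew c drop 0 L).map Prod.fst := by
    intro k
    simp only [S, Finset.mem_image, Finset.mem_filter, List.mem_toFinset]
    constructor
    · rintro ⟨⟨a, b⟩, ⟨h1, rfl⟩, rfl⟩; exact h1
    · intro h; exact ⟨_, ⟨h, rfl⟩, rfl⟩
  have hne : S.Nonempty := ⟨j, (hS j).mpr (List.mem_map_of_mem (f := Prod.fst) hj)⟩
  obtain ⟨lo, hlo, hmin⟩ : ∃ lo ∈ S, ∀ k ∈ S, lo ≤ k :=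
    ⟨S.min' hne, S.min'_mem hne, fun k hk => S.min'_le k hk⟩
  obtain ⟨hi, hhi, hmax⟩ : ∃ hi ∈ S, ∀ k ∈ S, k ≤ hi :=
    ⟨S.max' hne, S.max'_mem hne, fun k hk => S.le_max' k hk⟩
  obtain ⟨m, hm⟩ : ∃ m : ℕ, (m : ℤ) = hi - lo :=
    ⟨(hi - lo).toNat, Int.toNat_of_nonneg (sub_nonneg.mpr (hmin hi hhi))⟩
  have hrew : rew c drop (-lo) L = (rew c drop 0 L).map fun p => ((p.1.1, p.1.2 + -lo), p.2) := by
    rw [← rew_add, zero_add]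
  have hbox : ∀ q ∈ rew c drop (-lo) L, q.1.1 = p.1 → 0 ≤ q.1.2 ∧ q.1.2 ≤ m := by
    intro q hq hqp
    rw [hrew] at hq
    obtain ⟨r, hr, rfl⟩ := List.mem_map.mp hq
    have hrS : r.1.2 ∈ S := (hS _).mpr (by
      have := List.mem_map_of_mem (f := Prod.fst) hr
      rwa [← hqp])
    have := hmin _ hrS
    have := hmax _ hrS
    simp only
    omega
  have hmem : ∀ k ∈ S, toBox p.1 m (p.1, k - lo) ∈
      ((rew c drop (-lo) L).map fun q => (toBox p.1 m q.1, q.2)).map Prod.fst := by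
    intro k hk
    obtain ⟨r, hr, hrk⟩ := List.mem_map.mp ((hS k).mp hk)
    rw [hrew, List.map_map, List.map_map]
    refine List.mem_map.mpr ⟨r, hr, ?_⟩
    simp [hrk, sub_eq_add_neg]
  refine ⟨m, -lo, (rew c drop (-lo) L).map fun q => (toBox p.1 m q.1, q.2), ?_, ?_, ?_⟩
  · rw [List.map_map]
    conv_rhs => rw [← List.map_id (rew c drop (-lo) L)]
    refine List.map_congr_left fun q hq => ?_
    simp only [Function.comp_apply, id]
    rw [val_toBox (hbox q hq)]
  · rw [hm]; exact hmem hi hhi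
  · have := hmem lo hlo
    rwa [sub_self] at this

end OneRelator

namespace OneRelator

section Norm

variable {X : Type} [DecidableEq X]

lemma norm_pow_le (a : FreeGroup X) (k : ℕ) : (a ^ k).norm ≤ k * a.norm := by
  induction k with
  | zero => simp
  | succ k ih =>
    rw [pow_succ, add_mul, one_mul]
    exact (FreeGroup.norm_mul_le _ _).trans (Nat.add_le_add_right ih _)

lemma norm_of_zpow_le (w : X) (s : ℤ) : (FreeGroup.of w ^ s).norm ≤ s.natAbs := by
  have h := norm_pow_le (FreeGroup.of w) s.natAbs
  rw [FreeGroup.norm_of, mul_one] at h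
  rcases Int.natAbs_eq s with hs | hs
  · rw [hs, zpow_natCast, Int.natAbs_natCast]; exact h
  · rw [hs, zpow_neg, zpow_natCast, FreeGroup.norm_inv_eq, Int.natAbs_neg, Int.natAbs_natCast]
    exact h

lemma norm_mk_pow {L : List (X × Bool)} (hL : FreeGroup.IsCyclicallyReduced L) (k : ℕ) :
    (FreeGroup.mk L ^ k).norm = k * L.length := by
  rw [FreeGroup.pow_mk, FreeGroup.norm, FreeGroup.toWord_mk,
    (hL.flatten_replicate k).isReduced.reduce_eq]
  simp

/-- A cyclically reduced word is shortest in its conjugacy class. -/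
lemma length_le_norm_of_conj {L : List (X × Bool)} (hL : FreeGroup.IsCyclicallyReduced L)
    {a b : FreeGroup X} (h : FreeGroup.mk L = a * b * a⁻¹) : L.length ≤ b.norm := by
  by_contra hlt
  have h1 := norm_mk_pow hL (a.norm + a.norm + 1)
  rw [h, conj_pow] at h1
  have h2 := FreeGroup.norm_mul_le (a * b ^ (a.norm + a.norm + 1)) a⁻¹
  have h3 := FreeGroup.norm_mul_le a (b ^ (a.norm + a.norm + 1))
  have h4 := norm_pow_le b (a.norm + a.norm + 1)
  rw [FreeGroup.norm_inv_eq] at h2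
  nlinarith

end Norm

lemma exists_zpow_of_forall {X P : Type} [Group P] {f : X → P} {g : P} {L : List (X × Bool)}
    (h : ∀ p ∈ L, f p.1 = g ∨ f p.1 = 1) :
    ∃ s : ℤ, FreeGroup.lift f (FreeGroup.mk L) = g ^ s ∧ s.natAbs ≤ L.length := by
  induction L with
  | nil => exact ⟨0, by simp [← FreeGroup.one_eq_mk], le_rfl⟩
  | cons p L ih =>
    obtain ⟨s, hs, hsL⟩ := ih fun q hq => h q (List.mem_cons_of_mem _ hq)
    rw [lift_mk_cons, hs, List.length_cons]
    rcases h p List.mem_cons_self with hp | hp <;> rw [hp]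
    · split_ifs
      · exact ⟨1 + s, by rw [zpow_add, zpow_one], by omega⟩
      · exact ⟨-1 + s, by rw [zpow_add, zpow_neg_one], by omega⟩
    · exact ⟨s, by simp, by omega⟩

lemma exists_zpow_of_exists {X P : Type} [Group P] {f : X → P} {g : P} {L : List (X × Bool)}
    (h : ∀ p ∈ L, f p.1 = g ∨ f p.1 = 1) {p : X × Bool} (hp : p ∈ L) (hp1 : f p.1 = 1) :
    ∃ s : ℤ, FreeGroup.lift f (FreeGroup.mk L) = g ^ s ∧ s.natAbs < L.length := by
  obtain ⟨L₁, L₂, rfl⟩ := List.append_of_mem hp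
  obtain ⟨s, hs, hsL⟩ := exists_zpow_of_forall (f := f) (g := g) (L := L₁ ++ L₂) fun q hq =>
    h q (by rcases List.mem_append.mp hq with hq | hq <;> simp [hq])
  refine ⟨s, ?_, ?_⟩
  · rw [← hs, ← FreeGroup.mul_mk, ← FreeGroup.mul_mk, map_mul, map_mul, lift_mk_cons, hp1]
    simp
  · simp only [List.length_append, List.length_cons] at hsL ⊢
    omega

open Classical in
/-- The weight counting the occurrences of the letter `w`. -/
noncomputable def ind {X : Type} (w v : X) : ℤ := if v = w then 1 else 0

lemma ind_self {X : Type} (w : X) : ind w w = 1 := if_pos rfl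

lemma ind_of_ne {X : Type} {w v : X} (h : v ≠ w) : ind w v = 0 := if_neg h

lemma ht_sub {X : Type} (a b : ℤ) (f g : X → ℤ) (L : List (X × Bool)) :
    ht (fun w => a * f w - b * g w) L = a * ht f L - b * ht g L := by
  induction L with
  | nil => simp
  | cons p L ih =>
    rw [ht_cons, ht_cons, ht_cons, ih]
    unfold wt
    split_ifs <;> ring

/-- A cyclically reduced word in two letters which involves `x` with exponent sum `0` involves at
least two distinct conjugates of the other letter by powers of `x`. -/
lemma exists_label_ne {X : Type} {L : List (X × Bool)} (hL : FreeGroup.IsCyclicallyReduced L)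
    {x t : X} (hx : x ∈ L.map Prod.fst) (htx : t ≠ x) (hxt : ∀ p ∈ L, p.1 = x ∨ p.1 = t)
    (hht : ht (ind x) L = 0) (i j : ℤ) :
    ∃ p ∈ rew (ind x) (fun _ => false) i L, p.1.1 = t ∧ p.1.2 ≠ j := by
  classical
  by_contra! hcon
  obtain ⟨⟨w, b⟩, hp, rfl⟩ := List.mem_map.mp hx
  obtain ⟨k, hk⟩ := exists_mem_rew (c := ind w) (drop := fun _ => false) i hp rfl
  let f : X × ℤ → FreeGroup X := fun p => FreeGroup.of w ^ p.2 *
    (if p.1 = w then 1 else FreeGroup.of p.1) * FreeGroup.of w ^ (-p.2)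
  obtain ⟨s, hs, hsl⟩ := exists_zpow_of_exists (f := f) (g := f (t, j))
    (L := rew (ind w) (fun _ => false) i L) (fun p hp => by
      rcases hxt _ (mem_rew hp).1 with h | h
      · right
        simp only [f]
        rw [if_pos h, mul_one, ← zpow_add, add_neg_cancel, zpow_zero]
      · left
        rw [← h, ← hcon p hp h]) hk (by simp [f])
  have h := rew_lift (ind w) (fun _ => false) (FreeGroup.of w)
    (fun v => if v = w then 1 else FreeGroup.of v) i L
  have hid : (FreeGroup.lift fun v => if (fun _ => false) v = true then FreeGroup.of w ^ ind w v
      else (if v = w then 1 else FreeGroup.of v) * FreeGroup.of w ^ ind w v) =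
      MonoidHom.id (FreeGroup X) := by
    ext v
    by_cases hv : v = w
    · subst hv; simp [ind_self]
    · simp [ind_of_ne hv, hv]
  rw [hid, hs, hht, add_zero, MonoidHom.id_apply] at h
  have h2 : FreeGroup.mk L = (FreeGroup.of w ^ (j - i)) * FreeGroup.of t ^ s *
      (FreeGroup.of w ^ (j - i))⁻¹ := by
    rw [← eq_inv_mul_iff_mul_eq] at h
    rw [h]
    simp only [f, if_neg htx]
    rw [zpow_neg, conj_zpow]
    group
  have h3 := length_le_norm_of_conj hL h2
  have h4 := norm_of_zpow_le t s
  have h5 := length_rew_le (c := ind w) (drop := fun _ => false) i L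
  omega

section Induction

variable {X : Type} {n : ℕ} {L : List (X × Bool)} {x : X}

lemma good_of_drop (hn : 1 < n)
    (ih : ∀ (D : Type) (L' : List (D × Bool)) (d : D), L'.length < L.length →
      FreeGroup.IsCyclicallyReduced L' → d ∈ L'.map Prod.fst → Good n L' d)
    (hL : FreeGroup.IsCyclicallyReduced L) (hx : x ∈ L.map Prod.fst) {t : X}
    (ht' : t ∈ L.map Prod.fst) (htx : t ≠ x) {c : X → ℤ} (hc : c t ≠ 0) (hht : ht c L = 0) :
    Good n L x := by
  classical
  have hd : ∀ w w', decide (w = t) → decide (w' = t) → w = w' := by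
    intro w w' h h'
    rw [of_decide_eq_true h, of_decide_eq_true h']
  have hc' : ∀ w, decide (w = t) → c w ≠ 0 := by
    intro w h
    rwa [of_decide_eq_true h]
  obtain ⟨m, i, L', hL', hm, h0⟩ := exists_box (c := c) (drop := fun w => decide (w = t)) hx
    (by simpa using htx.symm)
  obtain ⟨p, hp, rfl⟩ := List.mem_map.mp ht'
  have hlen := congrArg List.length hL'
  rw [List.length_map] at hlen
  have hlt := length_rew_lt (c := c) (drop := fun w => decide (w = p.1)) i hp (by simp)
  have hcyc : FreeGroup.IsCyclicallyReduced L' := by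
    refine isCyclicallyReduced_of_map (f := Subtype.val) ?_
    rw [hL']
    exact isCyclicallyReduced_rew hd hc' hL hht i
  exact Good.step hn hd hc' hht hL' (ih _ _ _ (by omega) hcyc hm) (ih _ _ _ (by omega) hcyc h0)

lemma good_of_ht_ne_zero (hn : 1 < n)
    (ih : ∀ (D : Type) (L' : List (D × Bool)) (d : D), L'.length < L.length →
      FreeGroup.IsCyclicallyReduced L' → d ∈ L'.map Prod.fst → Good n L' d)
    (hL : FreeGroup.IsCyclicallyReduced L) (hx : x ∈ L.map Prod.fst) {t u : X}
    (ht' : t ∈ L.map Prod.fst) (htx : t ≠ x) (hut : u ≠ t) (hu : ht (ind u) L ≠ 0) :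
    Good n L x := by
  refine good_of_drop hn ih hL hx ht' htx
    (c := fun w => ht (ind u) L * ind t w - ht (ind t) L * ind u w) ?_ ?_
  · rw [ind_self, ind_of_ne hut.symm, mul_one, mul_zero, sub_zero]
    exact hu
  · rw [ht_sub]; ring

lemma good_of_two (hn : 1 < n)
    (ih : ∀ (D : Type) (L' : List (D × Bool)) (d : D), L'.length < L.length →
      FreeGroup.IsCyclicallyReduced L' → d ∈ L'.map Prod.fst → Good n L' d)
    (hL : FreeGroup.IsCyclicallyReduced L) (hx : x ∈ L.map Prod.fst) {t u : X}
    (ht' : t ∈ L.map Prod.fst) (hu : u ∈ L.map Prod.fst) (htx : t ≠ x) (hux : u ≠ x)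
    (hut : u ≠ t) : Good n L x := by
  by_cases h : ht (ind u) L = 0
  · exact good_of_drop hn ih hL hx hu hux (c := ind u) (by rw [ind_self]; exact one_ne_zero) h
  · exact good_of_ht_ne_zero hn ih hL hx ht' htx hut h

end Induction

/-- The Freiheitssatz and the centralizer property hold for every letter occurring in a cyclically
reduced relator. -/
theorem good_of_mem {n : ℕ} (hn : 1 < n) {X : Type} {L : List (X × Bool)} {x : X}
    (hL : FreeGroup.IsCyclicallyReduced L) (hx : x ∈ L.map Prod.fst) : Good n L x := by
  classical
  induction h : L.length using Nat.strong_induction_on generalizing X with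
  | _ N ih =>
  have ih' : ∀ (D : Type) (L' : List (D × Bool)) (d : D), L'.length < N →
      FreeGroup.IsCyclicallyReduced L' → d ∈ L'.map Prod.fst → Good n L' d :=
    fun D L' d h1 h2 h3 => ih _ h1 h2 h3 rfl
  subst h
  by_cases hall : ∀ p ∈ L, p.1 = x
  · exact good_of_forall_eq hn hall
  push Not at hall
  obtain ⟨p, hp, hpx⟩ := hall
  have hpm : p.1 ∈ L.map Prod.fst := List.mem_map_of_mem hp
  by_cases hx0 : ht (ind x) L = 0
  swap
  · exact good_of_ht_ne_zero hn ih' hL hx hpm hpx (Ne.symm hpx) hx0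
  by_cases hxt : ∀ q ∈ L, q.1 = x ∨ q.1 = p.1
  swap
  · push Not at hxt
    obtain ⟨q, hq, hqx, hqp⟩ := hxt
    exact good_of_two hn ih' hL hx hpm (List.mem_map_of_mem hq) hpx hqx hqp
  obtain ⟨m, i, L', hL', hm, h0⟩ := exists_box (c := ind x) (drop := fun _ => false) hx rfl
  have hcyc : FreeGroup.IsCyclicallyReduced L' := by
    refine isCyclicallyReduced_of_map (f := Subtype.val) ?_
    rw [hL']
    exact isCyclicallyReduced_rew (by simp) (by simp) hL hx0 i
  have hlen : L'.length ≤ L.length := by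
    have := congrArg List.length hL'
    rw [List.length_map] at this
    rw [this]
    exact length_rew_le i L
  obtain ⟨q₁, hq₁, h₁, -⟩ := exists_label_ne hL hx hpx hxt hx0 i 0
  obtain ⟨q₂, hq₂, h₂, h₁₂⟩ := exists_label_ne hL hx hpx hxt hx0 i q₁.1.2
  rw [← hL'] at hq₁ hq₂
  obtain ⟨r₁, hr₁, rfl⟩ := List.mem_map.mp hq₁
  obtain ⟨r₂, hr₂, rfl⟩ := List.mem_map.mp hq₂
  have key : ∀ d : Box x m, d.1.1 = x → d ∈ L'.map Prod.fst → Good n L' d := by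
    intro d hd hdm
    refine good_of_two hn (fun D K e hK => ih' D K e (hK.trans_le hlen)) hcyc hdm
      (List.mem_map_of_mem hr₁) (List.mem_map_of_mem hr₂) ?_ ?_ ?_
    · rintro rfl; exact hpx (h₁.symm.trans hd)
    · rintro rfl; exact hpx (h₂.symm.trans hd)
    · intro h; exact h₁₂ (by rw [h])
  exact Good.step hn (by simp) (by simp) hx0 hL'
    (key _ (by rw [val_toBox fun _ => ⟨by simp, le_rfl⟩]) hm)
    (key _ (by rw [val_toBox fun _ => ⟨le_rfl, by simp⟩]) h0)

end OneRelator

namespace OneRelator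

section FreeStable
open HNNExtension HNNExtension.NormalWord

/-- If the associated subgroups are trivial, then centralizers of nontrivial elements of
the base lie in the base. -/
lemma exists_of_commute_bot {H : Type} [Group H] {φ : (⊥ : Subgroup H) ≃* (⊥ : Subgroup H)} {β : H}
    (hβ : β ≠ 1) {g : HNNExtension H ⊥ ⊥ φ} (hg : of β * g = g * of β) : ∃ k, g = of k := by
  obtain ⟨ε, w, rfl, -⟩ := exists_rep g
  obtain ⟨h0, l, hc⟩ := w
  rcases l with _ | ⟨⟨u, h1⟩, l⟩
  · exact ⟨h0, by simp [ReducedWord.prod]⟩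
  exfalso
  obtain ⟨l', g1, g2, g3⟩ := exists_mul_of (φ := φ) ((u, h1) :: l) (by simp) hc β
  have hw := ReducedWord.map_fst_eq_and_of_prod_eq φ
    (w₁ := ⟨β * h0, (u, h1) :: l, hc⟩) (w₂ := ⟨h0, l', g1⟩) (by
      simp only [ReducedWord.prod] at hg ⊢
      rw [g3, map_mul, mul_assoc, hg, mul_assoc])
  have hm : (β * h0)⁻¹ * h0 ∈ (⊥ : Subgroup H) := by
    have := hw.2 u (by simp)
    rcases Int.units_eq_one_or u with rfl | rfl <;> simpa [toSubgroup] using this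
  rw [Subgroup.mem_bot, inv_mul_eq_one] at hm
  exact hβ (mul_eq_right.mp hm)

/-- Free factors contain the centralizers of their nontrivial elements. -/
lemma centralizer_le_of_zpow {r : FreeGroup (Fin 2)} {k : ℤ} (hk : 1 < k.natAbs)
    (hr : r = FreeGroup.of 1 ^ k) :
    Subgroup.centralizer
        {(PresentedGroup.of 1 : PresentedGroup ({r} : Set (FreeGroup (Fin 2))))} ≤
      Subgroup.zpowers (PresentedGroup.of 1 : PresentedGroup ({r} : Set (FreeGroup (Fin 2)))) := by
  set G := PresentedGroup ({r} : Set (FreeGroup (Fin 2)))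
  set b : G := PresentedGroup.of 1
  have hb : b ^ k = 1 := by
    have : PresentedGroup.mk {r} (FreeGroup.of 1 ^ k) = 1 := PresentedGroup.one_of_mem hr.symm
    rwa [map_zpow] at this
  have hb1 : b ≠ 1 := by
    let f : Fin 2 → Multiplicative (ZMod k.natAbs) := ![1, Multiplicative.ofAdd 1]
    have hf : ∀ s ∈ ({r} : Set (FreeGroup (Fin 2))), FreeGroup.lift f s = 1 := by
      intro s hs
      obtain rfl : s = FreeGroup.of 1 ^ k := hs.trans hr
      rw [map_zpow, FreeGroup.lift_apply_of]
      change Multiplicative.ofAdd (k • (1 : ZMod k.natAbs)) = 1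
      rw [ofAdd_eq_one, zsmul_one, ZMod.intCast_zmod_eq_zero_iff_dvd]
      exact Int.natAbs_dvd.mpr dvd_rfl
    intro h
    have h1 : PresentedGroup.toGroup hf b = f 1 := PresentedGroup.toGroup.of hf
    rw [h, map_one] at h1
    have : Fact (1 < k.natAbs) := ⟨hk⟩
    exact one_ne_zero (α := ZMod k.natAbs) (ofAdd_eq_one.mp h1.symm)
  let β : Subgroup.zpowers b := ⟨b, Subgroup.mem_zpowers b⟩
  let E := HNNExtension (Subgroup.zpowers b) ⊥ ⊥ (MulEquiv.refl _)
  let f : Fin 2 → E := ![t, of β]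
  have hf : ∀ s ∈ ({r} : Set (FreeGroup (Fin 2))), FreeGroup.lift f s = 1 := by
    intro s hs
    obtain rfl : s = FreeGroup.of 1 ^ k := hs.trans hr
    rw [map_zpow, FreeGroup.lift_apply_of]
    change (of β : E) ^ k = 1
    rw [← map_zpow, show β ^ k = 1 from Subtype.ext hb, map_one]
  let Θ : G →* E := PresentedGroup.toGroup hf
  let Ψ : E →* G := HNNExtension.lift (Subgroup.subtype _) (PresentedGroup.of 0) (by
    rintro ⟨a, ha⟩
    rw [Subgroup.mem_bot] at ha
    subst ha
    simp)
  have hΘ1 : Θ b = of β := PresentedGroup.toGroup.of hf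
  have hΨ : Ψ.comp Θ = MonoidHom.id G := by
    refine PresentedGroup.ext fun i => ?_
    fin_cases i
    · change Ψ (Θ (PresentedGroup.of 0)) = PresentedGroup.of 0
      rw [show Θ (PresentedGroup.of 0) = t from PresentedGroup.toGroup.of hf]
      exact HNNExtension.lift_t _ _ _
    · change Ψ (Θ b) = b
      rw [hΘ1]
      exact HNNExtension.lift_of _ _ _ _
  intro g hg
  rw [Subgroup.mem_centralizer_singleton_iff] at hg
  obtain ⟨h, hh⟩ := exists_of_commute_bot (β := β) (g := Θ g)
    (fun h => hb1 (congrArg Subtype.val h)) (by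
      rw [← hΘ1, ← map_mul, ← map_mul, hg])
  have : g = h := by
    rw [← MonoidHom.id_apply G g, ← hΨ, MonoidHom.comp_apply, hh]
    exact HNNExtension.lift_of _ _ _ _
  exact this ▸ h.2

end FreeStable

/-- The Magnus subgroup on the letter `1` contains the centralizers of its nontrivial elements if
the relator involves the letter `0`. -/
lemma centralizer_le_of_mem {L : List (Fin 2 × Bool)} {n : ℕ} (hn : 1 < n)
    (hL : FreeGroup.IsCyclicallyReduced L) (h0 : (0 : Fin 2) ∈ L.map Prod.fst) :
    Subgroup.centralizer
        {(PresentedGroup.of 1 : PresentedGroup ({FreeGroup.mk L ^ n} : Set (FreeGroup (Fin 2))))} ≤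
      Subgroup.zpowers
        (PresentedGroup.of 1 : PresentedGroup ({FreeGroup.mk L ^ n} : Set (FreeGroup (Fin 2)))) := by
  intro g hg
  rw [Subgroup.mem_centralizer_singleton_iff] at hg
  obtain ⟨g, rfl⟩ := PresentedGroup.mk_surjective _ g
  have hof : (FreeGroup.of 1 : FreeGroup (Fin 2)) ∈ avoid 0 := of_mem_avoid (by decide)
  obtain ⟨f, hf, hfg⟩ := Good.malnormal (g := g) hn (good_of_mem hn hL h0) hof
    (FreeGroup.of_ne_one 1) hof ((QuotientGroup.eq_one_iff _).mp (by
      change PresentedGroup.mk _ g * PresentedGroup.of 1 * (PresentedGroup.mk _ g)⁻¹ *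
        (PresentedGroup.of 1)⁻¹ = 1
      rw [hg]
      group))
  have hle : avoid (0 : Fin 2) ≤ Subgroup.zpowers (FreeGroup.of 1) := by
    refine (Subgroup.closure_le _).mpr ?_
    rintro _ ⟨i, hi, rfl⟩
    obtain rfl : i = 1 := Fin.eq_one_of_ne_zero i hi
    exact Subgroup.mem_zpowers _
  obtain ⟨k, rfl⟩ := hle hf
  refine ⟨k, ?_⟩
  have : (PresentedGroup.mk {FreeGroup.mk L ^ n}) (FreeGroup.of 1 ^ k) =
    PresentedGroup.mk {FreeGroup.mk L ^ n} g := QuotientGroup.eq.mpr hfg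
  rw [← this, map_zpow]
  rfl

end OneRelator

theorem statement_8 (R : FreeGroup (Fin 2)) (n : ℕ) (hn : 1 < n) (hR : R ≠ 1)
    (hcyc : CyclicallyReduced R) (hσ : σ 0 R = 0) :
    Subgroup.centralizer
        {(PresentedGroup.of 1 : PresentedGroup ({R ^ n} : Set (FreeGroup (Fin 2))))} =
      Subgroup.zpowers
        (PresentedGroup.of 1 : PresentedGroup ({R ^ n} : Set (FreeGroup (Fin 2)))) := by
  have hL : FreeGroup.IsCyclicallyReduced R.toWord :=
    ⟨FreeGroup.isReduced_toWord, fun a ha c hc h => (hcyc c hc a ha h.symm).symm⟩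
  refine le_antisymm ?_ ?_
  · by_cases h0 : (0 : Fin 2) ∈ R.toWord.map Prod.fst
    · have := OneRelator.centralizer_le_of_mem hn hL h0
      rwa [FreeGroup.mk_toWord] at this
    · obtain ⟨k, hk⟩ := OneRelator.mk_mem_zpowers (x := (1 : Fin 2)) (L := R.toWord) fun p hp =>
        Fin.eq_one_of_ne_zero p.1 fun h => h0 (List.mem_map.mpr ⟨p, hp, h⟩)
      rw [FreeGroup.mk_toWord] at hk
      have hk0 : k ≠ 0 := by
        rintro rfl
        exact hR (by simpa using hk.symm)
      refine OneRelator.centralizer_le_of_zpow (k := k * n) ?_ ?_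
      · rw [Int.natAbs_mul, Int.natAbs_natCast]
        exact hn.trans_le (Nat.le_mul_of_pos_left n (Int.natAbs_pos.mpr hk0))
      · rw [← hk, zpow_mul, zpow_natCast]
  · rw [Subgroup.zpowers_le, Subgroup.mem_centralizer_singleton_iff]
end
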